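/- arXiv:math/0605318 — 2 statements merged into one kernel-verified Lean document; each statement's English description precedes it below -/
import Mathlib

section
/- An algebraic integer d lies in some cyclotomic field if and only if the Galois group of the splitting field over ℚ of its minimal polynomial is abelian. -/
open Polynomial

section KWhelpers

section
open NumberField Polynomial

namespace KW

lemma coe_smul' {M : Type*} [Field M] [NumberField M] (g : Gal(M/ℚ)) (x : 𝓞 M) : ((g • x : 𝓞 M) : M) = g x := rfl

theorem iSup_inertia (M : Type*) [Field M] [NumberField M] [IsGalois ℚ M] (H : Subgroup Gal(M/ℚ))
    (h : ∀ (P : Ideal (𝓞 M)), P.IsMaximal → P.inertia Gal(M/ℚ) ≤ H) : H = ⊤ := by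
  let E := IntermediateField.fixedField H
  have hE : Module.finrank ℚ E = 1 := by
    by_contra hne
    obtain ⟨q, hq, hq2⟩ := NumberField.exists_not_isUnramifiedAt_int (𝒪 := 𝓞 E) hne
    apply hq2
    have : IsGaloisGroup H E M := IsGaloisGroup.subgroup Gal(M/ℚ) ℚ M H
    have : IsGaloisGroup H (𝓞 E) (𝓞 M) := IsGaloisGroup.of_isFractionRing H (𝓞 E) (𝓞 M) E M
    obtain ⟨P, hP, hP2⟩ := Ideal.exists_maximal_ideal_liesOver_of_isIntegral (S := 𝓞 M) q
    rw [← Ideal.ramificationIdx_eq_one_iff]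
    have h1 := Ideal.card_inertia_eq_ramificationIdxIn (G := H) q P
    have : (P.under ℤ).IsMaximal := Ideal.IsMaximal.under ℤ P
    have h2 := Ideal.card_inertia_eq_ramificationIdxIn (G := Gal(M/ℚ)) (P.under ℤ) P
    rw [Ideal.ramificationIdxIn_eq_ramificationIdx q P H] at h1
    rw [Ideal.ramificationIdxIn_eq_ramificationIdx _ P Gal(M/ℚ), Ideal.ramificationIdx_tower q P, ← h1] at h2
    have h3 : Nat.card (P.inertia Gal(M/ℚ)) = Nat.card (P.inertia H) := by
      have := AddSubgroup.subgroupOf_inertia P.toAddSubgroup H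
      unfold Ideal.inertia
      rw [← this]
      exact (Nat.card_congr (Subgroup.subgroupOfEquivOfLe (h P hP)).toEquiv).symm
    rw [h3] at h2
    have h4 : 0 < Nat.card (P.inertia H) := Nat.card_pos
    nlinarith
  have : E = ⊥ := IntermediateField.finrank_eq_one_iff.mp hE
  have h5 : IntermediateField.fixingSubgroup E = H := IntermediateField.fixingSubgroup_fixedField H
  rw [← h5, this]
  simp
end KW
end

section
open NumberField Polynomial

namespace KW
variable {M : Type*} [Field M] [NumberField M]

lemma eq_one_of_smul (g : Gal(M/ℚ)) (h : ∀ x : 𝓞 M, g • x = x) : g = 1 := by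
  ext x
  obtain ⟨a, b, hb, rfl⟩ := IsFractionRing.div_surjective (A := 𝓞 M) x
  have ha := congrArg (fun z : 𝓞 M => (z : M)) (h a)
  have hb' := congrArg (fun z : 𝓞 M => (z : M)) (h b)
  simp only [coe_smul'] at ha hb'
  simp [ha, hb']

lemma smul_root_of_unity (P : Ideal (𝓞 M)) (hP : P.IsPrime) (g : Gal(M/ℚ))
    (hg : g ∈ P.inertia Gal(M/ℚ)) (z : M) (r : ℕ) (hr0 : r ≠ 0) (hz : z ^ r = 1)
    (hr : (r : 𝓞 M) ∉ P) : g z = z := by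
  have hzi : IsIntegral ℤ z := IsIntegral.of_pow (Nat.pos_of_ne_zero hr0) (hz ▸ isIntegral_one)
  let Z : 𝓞 M := ⟨z, hzi⟩
  have hZ : Z ^ r = 1 := by
    apply RingOfIntegers.coe_injective; rw [map_pow, map_one]; exact hz
  have hgZ : (g • Z) ^ r = 1 := by rw [← smul_pow', hZ, smul_one]
  let η : 𝓞 M := g • Z * Z ^ (r - 1)
  have hη : η ^ r = 1 := by
    simp only [η]; rw [mul_pow, hgZ, ← pow_mul, mul_comm (r-1), pow_mul, hZ]; simp
  have hZZ : Z ^ (r - 1) * Z = 1 := by rw [← pow_succ, Nat.sub_add_cancel (Nat.pos_of_ne_zero hr0), hZ]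
  have hmem : η - 1 ∈ P := by
    have h1 := hg Z
    have : η - 1 = Z ^ (r-1) * (g • Z - Z) := by
      simp only [η]; linear_combination hZZ
    rw [this]; exact P.mul_mem_left _ h1
  by_cases h1 : η = 1
  · have : g • Z = Z := by
      calc g • Z = η * Z := by simp only [η]; linear_combination (-(g • Z)) * hZZ
        _ = Z := by rw [h1, one_mul]
    exact congrArg (fun z : 𝓞 M => (z : M)) this
  · exfalso
    apply hr
    have hs : (∑ i ∈ Finset.range r, η ^ i) = 0 := by
      have := mul_geom_sum η r
      rw [hη, sub_self] at this
      exact (mul_eq_zero.mp this).resolve_left (sub_ne_zero.mpr h1)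
    rw [← Ideal.Quotient.eq_zero_iff_mem]
    have h2 : Ideal.Quotient.mk P η = 1 := by
      rw [← sub_eq_zero, ← map_one (Ideal.Quotient.mk P), ← map_sub]
      exact Ideal.Quotient.eq_zero_iff_mem.mpr hmem
    have := congrArg (Ideal.Quotient.mk P) hs
    simpa [map_sum, h2] using this

lemma tame_aux (P : Ideal (𝓞 M)) (hP : P.IsMaximal) (q : ℕ) (hqP : (q : 𝓞 M) ∈ P)
    (g : Gal(M/ℚ)) (hg : g ∈ P.inertia Gal(M/ℚ)) (hg2 : ∀ y ∈ P, g • y - y ∈ P ^ 2)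
    (k : ℕ) (hk : k.Coprime q) (hgk : g ^ k = 1) : g = 1 := by
  have A : ∀ n : ℕ, ∀ y ∈ P ^ n, g • y - y ∈ P ^ (n + 1) := by
    intro n
    induction n with
    | zero => intro y _; simpa using hg y
    | succ n ih =>
      intro y hy
      rw [pow_succ] at hy
      refine Submodule.mul_induction_on hy ?_ ?_
      · intro a ha b hb
        have h1 : g • b ∈ P := by
          have := P.add_mem (hg b) hb
          simpa using this
        have : g • (a * b) - a * b = (g • a - a) * (g • b) + a * (g • b - b) := by
          rw [smul_mul']; ring
        rw [this]
        refine add_mem ?_ ?_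
        · rw [pow_succ]; exact Ideal.mul_mem_mul (ih a ha) h1
        · rw [show n + 1 + 1 = n + 2 by ring, pow_add]; exact Ideal.mul_mem_mul ha (hg2 b hb)
      · intro a b ha hb
        have : g • (a + b) - (a + b) = (g • a - a) + (g • b - b) := by
          rw [smul_add]; ring
        rw [this]; exact add_mem ha hb
  have B : ∀ n : ℕ, ∀ x : 𝓞 M, g • x - x ∈ P ^ n := by
    intro n
    induction n with
    | zero => intro x; simp
    | succ n ih =>
      intro x
      have C : ∀ j : ℕ, (g ^ j) • x - x ∈ P ^ n ∧ (g ^ j) • x - x - j * (g • x - x) ∈ P ^ (n+1) := by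
        intro j
        induction j with
        | zero => simp
        | succ j ihj =>
          have e : (g ^ (j+1)) • x - x = (g • ((g ^ j) • x - x) - ((g ^ j) • x - x)) + ((g ^ j) • x - x) + (g • x - x) := by
            rw [pow_succ', mul_smul, smul_sub]; ring
          have h1 := A n _ ihj.1
          refine ⟨?_, ?_⟩
          · rw [e]
            exact add_mem (add_mem (Ideal.pow_le_pow_right (Nat.le_succ n) h1) ihj.1) (ih x)
          · have : (g ^ (j+1)) • x - x - ((j+1 : ℕ) : 𝓞 M) * (g • x - x) = (g • ((g ^ j) • x - x) - ((g ^ j) • x - x)) + ((g ^ j) • x - x - j * (g • x - x)) := by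
              rw [e]; push_cast; ring
            rw [this]; exact add_mem h1 ihj.2
      have h1 := (C k).2
      rw [hgk, one_smul, sub_self, zero_sub] at h1
      have h1 := neg_mem h1
      rw [neg_neg] at h1
      have h2 : (q : 𝓞 M) * (g • x - x) ∈ P ^ (n+1) := by
        rw [pow_succ']; exact Ideal.mul_mem_mul hqP (ih x)
      obtain ⟨a, b, hab⟩ := (Nat.isCoprime_iff_coprime.mpr hk)
      have hab' : (a : 𝓞 M) * (k : 𝓞 M) + (b : 𝓞 M) * (q : 𝓞 M) = 1 := by exact_mod_cast congrArg (Int.cast : ℤ → 𝓞 M) hab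
      have : g • x - x = a * (k * (g • x - x)) + b * (q * (g • x - x)) := by
        linear_combination (-(g • x - x)) * hab'
      rw [this]
      exact add_mem (Ideal.mul_mem_left _ _ h1) (Ideal.mul_mem_left _ _ h2)
  apply eq_one_of_smul
  intro x
  have : g • x - x ∈ (⨅ n : ℕ, P ^ n) := by
    simp only [Submodule.mem_iInf]; exact fun n => B n x
  rw [Ideal.iInf_pow_eq_bot_of_isDomain P hP.ne_top] at this
  exact sub_eq_zero.mp (by simpa using this)

lemma inertia_mem (P : Ideal (𝓞 M)) (g : Gal(M/ℚ)) (hg : g ∈ P.inertia Gal(M/ℚ)) (n : ℕ)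
    (x : 𝓞 M) (hx : x ∈ P ^ n) : g • x ∈ P ^ n := by
  induction n generalizing x with
  | zero => simp
  | succ n ih =>
    rw [pow_succ] at hx ⊢
    refine Submodule.mul_induction_on hx ?_ ?_
    · intro a ha b hb
      rw [smul_mul']
      refine Ideal.mul_mem_mul (ih a ha) ?_
      have := P.add_mem (hg b) hb
      simpa using this
    · intro a b ha hb
      rw [smul_add]; exact add_mem ha hb

lemma frob_exists [IsGalois ℚ M] (P : Ideal (𝓞 M)) (hP : P.IsMaximal) (q : ℕ) (hq : q.Prime)
    (hqP : (q : 𝓞 M) ∈ P) : ∃ d : Gal(M/ℚ), ∀ x, d • x - x ^ q ∈ P := by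
  have hP0 : P ≠ ⊥ := by
    rintro rfl
    have : (q : 𝓞 M) = 0 := by simpa using hqP
    exact hq.ne_zero (by exact_mod_cast this)
  have : Finite (𝓞 M ⧸ P) := Ideal.finiteQuotientOfFreeOfNeBot P hP0
  obtain ⟨d, hd⟩ := IsArithFrobAt.exists_of_isInvariant ℤ Gal(M/ℚ) P
  refine ⟨d, fun x => ?_⟩
  have h1 := hd x
  have hu : P.under ℤ = Ideal.span {(q : ℤ)} := by
    symm
    have : (Ideal.span {(q : ℤ)}).IsMaximal := by
      apply PrincipalIdealRing.isMaximal_of_irreducible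
      exact (Nat.prime_iff_prime_int.mp hq).irreducible
    apply this.eq_of_le (Ideal.IsPrime.under ℤ P).ne_top
    rw [Ideal.span_singleton_le_iff_mem]
    simpa [Ideal.mem_comap] using hqP
  have hc : Nat.card (ℤ ⧸ P.under ℤ) = q := by
    rw [hu, Int.card_ideal_quot]
  rw [hc] at h1
  exact h1

end KW
end

section
open NumberField Polynomial

namespace KW
variable {M : Type*} [Field M] [NumberField M]
theorem tame [IsGalois ℚ M] (hcomm : ∀ σ τ : Gal(M/ℚ), σ * τ = τ * σ)
    (P : Ideal (𝓞 M)) (hP : P.IsMaximal) (q : ℕ) (hq : q.Prime) (hqP : (q : 𝓞 M) ∈ P)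
    (hk : ∀ g ∈ P.inertia Gal(M/ℚ), ∃ k : ℕ, k.Coprime q ∧ g ^ k = 1) :
    Nat.card (P.inertia Gal(M/ℚ)) ≤ q - 1 := by
  have hP0 : P ≠ ⊥ := by
    rintro rfl
    have : (q : 𝓞 M) = 0 := by simpa using hqP
    exact hq.ne_zero (by exact_mod_cast this)
  obtain ⟨d, hd⟩ := frob_exists P hP q hq hqP
  obtain ⟨π, hπ, hπ2⟩ := Ideal.exists_mem_pow_notMem_pow_succ P hP0 hP.ne_top 1
  have hπ1 : π ∈ P := by simpa using hπ
  have key : ∀ y ∈ P, ∃ t, y - π * t ∈ P ^ 2 := by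
    intro y hy
    obtain ⟨t, e, he, h⟩ := Ideal.exists_mul_add_mem_pow_succ (P := P) hP0 π y hπ hπ2 (by simpa using hy)
    exact ⟨t, by rw [← h]; simpa using he⟩
  have canc : ∀ t, π * t ∈ P ^ 2 → t ∈ P := by
    intro t ht
    exact Ideal.mem_prime_of_mul_mem_pow hP0 hπ2 ht
  have hst : ∀ g ∈ P.inertia Gal(M/ℚ), ∀ y ∈ P, g • y ∈ P := fun g hg y hy => by
    simpa using inertia_mem P g hg 1 y (by simpa using hy)
  have hst2 : ∀ g ∈ P.inertia Gal(M/ℚ), ∀ y ∈ P ^ 2, g • y ∈ P ^ 2 := fun g hg y hy =>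
    inertia_mem P g hg 2 y hy
  have hch : ∀ g : P.inertia Gal(M/ℚ), ∃ u, g.1 • π - π * u ∈ P ^ 2 := fun g =>
    key _ (hst g.1 g.2 π hπ1)
  choose u hu using hch
  -- d stabilizes P
  have hd1 : ∀ y ∈ P, d • y ∈ P := fun y hy => by
    have := P.add_mem (hd y) (P.pow_mem_of_mem hy q hq.pos)
    simpa using this
  have hdinv : ∀ y, d • y ∈ P → y ∈ P := fun y hy => by
    have := P.sub_mem hy (hd y)
    exact hP.isPrime.mem_of_pow_mem q (by simpa using this)
  have hd2 : ∀ y ∈ P ^ 2, d • y ∈ P ^ 2 := by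
    intro y hy
    rw [pow_two] at hy ⊢
    refine Submodule.mul_induction_on hy ?_ ?_
    · intro a ha b hb
      rw [smul_mul']; exact Ideal.mul_mem_mul (hd1 a ha) (hd1 b hb)
    · intro a b ha hb
      rw [smul_add]; exact add_mem ha hb
  have hunit : ∀ g, u g ∉ P := by
    intro g hg
    apply hπ2
    have h1 : g.1 • π ∈ P ^ 2 := by
      have : π * u g ∈ P ^ 2 := by rw [pow_two]; exact Ideal.mul_mem_mul hπ1 hg
      simpa using add_mem (hu g) this
    have := hst2 g.1⁻¹ (inv_mem g.2) _ h1
    simpa using this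
  obtain ⟨t, ht⟩ := key (d • π) (hd1 π hπ1)
  -- t ∉ P
  have htP : t ∉ P := by
    intro h
    have h1 : d • π ∈ P ^ 2 := by
      have : π * t ∈ P ^ 2 := by rw [pow_two]; exact Ideal.mul_mem_mul hπ1 h
      simpa using add_mem ht this
    -- d⁻¹ is a power of d
    have hfin : ∃ n : ℕ, 0 < n ∧ d ^ n = 1 := ⟨orderOf d, orderOf_pos d, pow_orderOf_eq_one d⟩
    obtain ⟨n, hn, hdn⟩ := hfin
    have h2 : ∀ j : ℕ, (d ^ (j + 1)) • π ∈ P ^ 2 := by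
      intro j
      induction j with
      | zero => simpa using h1
      | succ j ih => rw [pow_succ' d, mul_smul]; exact hd2 _ ih
    have := h2 (n - 1)
    rw [Nat.sub_add_cancel hn, hdn, one_smul] at this
    exact hπ2 this
  have hfrob : ∀ g, u g ^ q - u g ∈ P := by
    intro g
    -- d • g • π
    have e1 : d • (g.1 • π) - (π * t) * (u g ^ q) ∈ P ^ 2 := by
      have a1 := hd2 _ (hu g)
      rw [smul_sub, smul_mul'] at a1
      have a2 : (d • π) * (d • u g - u g ^ q) ∈ P ^ 2 := by
        rw [pow_two]; exact Ideal.mul_mem_mul (hd1 π hπ1) (hd _)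
      have a3 : (d • π - π * t) * (u g ^ q) ∈ P ^ 2 := Ideal.mul_mem_right _ _ ht
      have := add_mem (add_mem a1 a2) a3
      convert this using 1; ring
    have e2 : g.1 • (d • π) - (π * t) * u g ∈ P ^ 2 := by
      have a1 := hst2 g.1 g.2 _ ht
      rw [smul_sub, smul_mul'] at a1
      have a2 : (g.1 • π) * (g.1 • t - t) ∈ P ^ 2 := by
        rw [pow_two]; exact Ideal.mul_mem_mul (hst g.1 g.2 π hπ1) (g.2 t)
      have a3 : (g.1 • π - π * u g) * t ∈ P ^ 2 := Ideal.mul_mem_right _ _ (hu g)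
      have := add_mem (add_mem a1 a2) a3
      convert this using 1; ring
    rw [← mul_smul, hcomm, mul_smul] at e1
    have e3 := sub_mem e2 e1
    have e4 : π * (t * (u g ^ q - u g)) ∈ P ^ 2 := by convert e3 using 1; ring
    exact (hP.isPrime.mem_or_mem (canc _ e4)).resolve_left htP
  have hinj : Function.Injective (fun g : P.inertia Gal(M/ℚ) => Ideal.Quotient.mk P (u g)) := by
    intro g h hgh
    have h0 : u g - u h ∈ P := (Ideal.Quotient.eq).mp hgh
    have h1 : g.1 • π - h.1 • π ∈ P ^ 2 := by
      have a := hu g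
      have b := hu h
      have c : π * (u g - u h) ∈ P ^ 2 := by rw [pow_two]; exact Ideal.mul_mem_mul hπ1 h0
      have := add_mem (sub_mem a b) c
      convert this using 1; ring
    have hm : h.1⁻¹ * g.1 ∈ P.inertia Gal(M/ℚ) := mul_mem (inv_mem h.2) g.2
    have h2 : (h.1⁻¹ * g.1) • π - π ∈ P ^ 2 := by
      have := hst2 _ (inv_mem h.2) _ h1
      rw [smul_sub, ← mul_smul, inv_smul_smul] at this
      exact this
    obtain ⟨k, hk1, hk2⟩ := hk _ hm
    have := tame_aux P hP q hqP (h.1⁻¹ * g.1) hm ?_ k hk1 hk2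
    · apply Subtype.ext
      exact (inv_mul_eq_one.mp this).symm
    · intro y hy
      obtain ⟨s, hs⟩ := key y hy
      set f := h.1⁻¹ * g.1
      have a1 := hst2 f hm _ hs
      rw [smul_sub, smul_mul'] at a1
      have a2 : (f • π - π) * (f • s) ∈ P ^ 2 := Ideal.mul_mem_right _ _ h2
      have a3 : π * (f • s - s) ∈ P ^ 2 := by rw [pow_two]; exact Ideal.mul_mem_mul hπ1 (hm s)
      have := sub_mem (add_mem (add_mem a1 a2) a3) hs
      convert this using 1; ring
  let κ := 𝓞 M ⧸ P
  let _ : Field κ := Ideal.Quotient.field P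
  classical
  have hsub : Set.range (fun g : P.inertia Gal(M/ℚ) => (Ideal.Quotient.mk P (u g) : κ)) ⊆
      ((nthRoots (q - 1) (1 : κ)).toFinset : Set κ) := by
    rintro _ ⟨g, rfl⟩
    have hq1 : 0 < q - 1 := Nat.sub_pos_of_lt hq.one_lt
    simp only [Finset.mem_coe, Multiset.mem_toFinset]
    rw [mem_nthRoots hq1]
    have h0 : (Ideal.Quotient.mk P (u g) : κ) ≠ 0 := fun h => hunit g (Ideal.Quotient.eq_zero_iff_mem.mp h)
    have h1 : (Ideal.Quotient.mk P (u g) : κ) ^ q = (Ideal.Quotient.mk P (u g) : κ) := by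
      rw [← map_pow]; exact (Ideal.Quotient.eq).mpr (hfrob g)
    apply mul_right_cancel₀ h0
    rw [← pow_succ, Nat.sub_add_cancel hq.one_le, h1, one_mul]
  rw [Nat.card_congr (Equiv.ofInjective _ hinj), Nat.card_coe_set_eq]
  calc _ ≤ ((nthRoots (q - 1) (1 : κ)).toFinset : Set κ).ncard := Set.ncard_le_ncard hsub (Finset.finite_toSet _)
    _ = (nthRoots (q - 1) (1 : κ)).toFinset.card := Set.ncard_coe_finset _
    _ ≤ Multiset.card (nthRoots (q - 1) (1 : κ)) := Multiset.toFinset_card_le _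
    _ ≤ q - 1 := card_nthRoots _ _

theorem finite_ram (K : Type*) [Field K] [NumberField K] : ∃ D : ℕ, D ≠ 0 ∧ ∀ (q : ℕ), q.Prime →
    ∀ P : Ideal (𝓞 K), P.IsMaximal → (q : 𝓞 K) ∈ P → ¬ q ∣ D → P.inertia Gal(K/ℚ) = ⊥ := by
  classical
  have h : ∀ g : Gal(K/ℚ), ∃ x : 𝓞 K, g ≠ 1 → g • x - x ≠ 0 := by
    intro g
    by_contra! h
    exact (h 0).1 (eq_one_of_smul g fun x => sub_eq_zero.mp (h x).2)
  choose x hx using h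
  let d : 𝓞 K := ∏ g ∈ (Finset.univ : Finset Gal(K/ℚ)).erase 1, (g • x g - x g)
  have hd : d ≠ 0 := Finset.prod_ne_zero_iff.mpr fun g hg => hx g (Finset.ne_of_mem_erase hg)
  refine ⟨Ideal.absNorm (Ideal.span {d}), by simpa [Ideal.absNorm_eq_zero_iff] using hd, ?_⟩
  intro q hq P hP hqP hqD
  rw [eq_bot_iff]
  intro g hg
  by_contra hg1
  apply hqD
  have hdP : d ∈ P := by
    apply Ideal.mem_of_dvd P (Finset.dvd_prod_of_mem _ (Finset.mem_erase.mpr ⟨by simpa using hg1, Finset.mem_univ g⟩))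
    exact hg (x g)
  have hD : ((Ideal.absNorm (Ideal.span {d}) : ℕ) : 𝓞 K) ∈ P :=
    ((Ideal.span_singleton_le_iff_mem P).mpr hdP) (Ideal.absNorm_mem _)
  by_contra hqn
  obtain ⟨a, b, hab⟩ := Nat.isCoprime_iff_coprime.mpr ((Nat.Prime.coprime_iff_not_dvd hq).mpr hqn)
  have hab' := congrArg (Int.cast : ℤ → 𝓞 K) hab
  push_cast at hab'
  apply hP.ne_top
  rw [Ideal.eq_top_iff_one, ← hab']
  exact add_mem (Ideal.mul_mem_left _ _ hqP) (Ideal.mul_mem_left _ _ hD)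
end KW
end

section
open NumberField Polynomial

namespace KW
section ring
variable {R : Type*} [CommRing R] [IsDomain R] (l : R) (hl : Prime l) (p : ℕ) (hp : p.Prime)
  (φ : R →+* R) (s t : ℕ) (hst : s + t = p) (w : R)

lemma phi_sub (h1 : ∀ x : R, ∃ n : ℤ, l ∣ x - n) (hw : φ l = l * w) (x : R) : l ∣ φ x - x := by
  obtain ⟨n, y, hy⟩ := h1 x
  have : φ x - n = l * (w * φ y) := by
    have := congrArg φ hy
    rw [map_sub, map_mul, hw, map_intCast] at this
    rw [this]; ring
  exact ⟨w * φ y - y, by linear_combination this - hy⟩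

include hp in
lemma pow_p_sub (h1 : ∀ x : R, ∃ n : ℤ, l ∣ x - n) (h2 : ∀ n : ℤ, l ∣ (n : R) ↔ (p : ℤ) ∣ n)
    (c : R) : l ∣ c ^ p - c := by
  haveI := Fact.mk hp
  obtain ⟨n, hn⟩ := h1 c
  have e1 : l ∣ c ^ p - (n : R) ^ p := hn.trans (sub_dvd_pow_sub_pow _ _ _)
  have e2 : l ∣ (n : R) ^ p - n := by
    have : (p : ℤ) ∣ n ^ p - n := by
      rw [← ZMod.intCast_zmod_eq_zero_iff_dvd]
      simp [ZMod.pow_card]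
    have := (h2 _).mpr this
    simpa using this
  have := (e1.add e2).sub hn
  convert this using 1; ring

lemma pow_lin (k : ℕ) (hk : 1 ≤ k) (x : R) (m : ℕ) :
    l ^ (k + 1) ∣ (1 + l ^ k * x) ^ m - (1 + m * (l ^ k * x)) := by
  induction m with
  | zero => simp
  | succ m ih =>
    obtain ⟨y, hy⟩ := ih
    obtain ⟨j, rfl⟩ := Nat.exists_eq_add_of_le hk
    refine ⟨y * (1 + l ^ (1 + j) * x) + m * l ^ j * x ^ 2, ?_⟩
    push_cast
    rw [pow_succ]
    linear_combination (1 + l ^ (1 + j) * x) * hy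

include hl hp hst in
lemma step_k (h1 : ∀ x : R, ∃ n : ℤ, l ∣ x - n) (h2 : ∀ n : ℤ, l ∣ (n : R) ↔ (p : ℤ) ∣ n)
    (h3 : l ^ (p - 1) ∣ (p : R)) (hw : φ l = l * w) (hws : l ∣ w - s)
    (b c : R) (hc : c ^ p = φ b * b ^ t) (k : ℕ) (hk : 1 ≤ k) (hkp : k < p)
    (hsk : ¬ (p : ℤ) ∣ (s : ℤ) ^ k - s) (hb : l ^ k ∣ b - 1) : l ^ (k + 1) ∣ b - 1 := by
  obtain ⟨x, hx⟩ := hb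
  have hbx : b = 1 + l ^ k * x := by linear_combination hx
  have hlb : l ∣ b - 1 := by rw [hx]; exact (dvd_pow_self l (by omega)).mul_right _
  have hφ := phi_sub l φ w h1 hw
  have hcp : l ∣ c ^ p - 1 := by
    rw [hc]
    have e1 : l ∣ b ^ t - 1 := by simpa using hlb.trans (sub_dvd_pow_sub_pow b 1 t)
    have := ((hφ b).add hlb).mul_right (b ^ t) |>.add e1
    convert this using 1; ring
  have hc1 : l ∣ c - 1 := by
    have := hcp.sub (pow_p_sub l p hp h1 h2 c)
    convert this using 1; ring
  have hcpp : l ^ p ∣ c ^ p - 1 := by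
    obtain ⟨e, he⟩ := hc1
    obtain ⟨r, hr⟩ := exists_add_pow_prime_eq hp 1 (l * e)
    have : c = 1 + l * e := by linear_combination he
    rw [this, hr]
    obtain ⟨q, hq⟩ := h3
    have hpp : l ^ p = l ^ (p - 1) * l := by rw [← pow_succ, Nat.sub_add_cancel hp.one_le]
    refine ⟨e ^ p + q * e * r, ?_⟩
    rw [hq, mul_pow, hpp]; ring
  have hc2 : l ^ (k + 1) ∣ c ^ p - 1 := (pow_dvd_pow l (by omega)).trans hcpp
  have hb2 := pow_lin l k hk x t
  rw [← hbx] at hb2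
  -- φ b
  have hφb : l ^ (k + 1) ∣ φ b - (1 + l ^ k * ((s : R) ^ k * x)) := by
    have : φ b = 1 + l ^ k * (w ^ k * φ x) := by rw [hbx]; simp [hw, mul_pow, mul_assoc]
    rw [this, show 1 + l ^ k * (w ^ k * φ x) - (1 + l ^ k * ((s : R) ^ k * x)) =
      l ^ k * ((w ^ k - (s : R) ^ k) * φ x + (s : R) ^ k * (φ x - x)) by ring, pow_succ]
    apply mul_dvd_mul_left
    exact ((hws.trans (sub_dvd_pow_sub_pow _ _ _)).mul_right _).add ((hφ x).mul_left _)
  have hfin : l ^ (k + 1) ∣ l ^ k * (((s : R) ^ k + t) * x) := by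
    have e1 := hφb.mul_right (b ^ t)
    have e2 := hb2.mul_left (1 + l ^ k * ((s : R) ^ k * x))
    rw [hc] at hc2
    have e3 : l ^ (k + 1) ∣ (l ^ k * l ^ k) * ((s : R) ^ k * x * t * x) := by
      rw [← pow_add]; exact (pow_dvd_pow l (by omega)).mul_right _
    have := ((hc2.sub e1).sub e2).sub e3
    convert this using 1; ring
  rw [pow_succ] at hfin
  have h5 := (mul_dvd_mul_iff_left (pow_ne_zero k hl.ne_zero)).mp hfin
  rcases hl.dvd_or_dvd h5 with h6 | h6
  · exfalso
    apply hsk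
    have h7 : l ∣ (((s : ℤ) ^ k + t : ℤ) : R) := by simpa using h6
    have h8 := (h2 _).mp h7
    have h9 : (s : ℤ) ^ k - s = (s : ℤ) ^ k + t - p := by rw [← hst]; push_cast; ring
    rw [h9]; exact h8.sub dvd_rfl
  · rw [hx, pow_succ]; exact mul_dvd_mul_left _ h6

include hl hp hst in
lemma step_all (h1 : ∀ x : R, ∃ n : ℤ, l ∣ x - n) (h2 : ∀ n : ℤ, l ∣ (n : R) ↔ (p : ℤ) ∣ n)
    (h3 : l ^ (p - 1) ∣ (p : R)) (hw : φ l = l * w) (hws : l ∣ w - s)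
    (b c : R) (hc : c ^ p = φ b * b ^ t)
    (hsk : ∀ k, 2 ≤ k → k < p → ¬ (p : ℤ) ∣ (s : ℤ) ^ k - s) (hb : l ^ 2 ∣ b - 1) :
    l ^ p ∣ b - 1 := by
  have : ∀ k, 2 ≤ k → k ≤ p → l ^ k ∣ b - 1 := by
    intro k hk
    induction k, hk using Nat.le_induction with
    | base => intro _; exact hb
    | succ k hk ih =>
      intro hkp
      exact step_k l hl p hp φ s t hst w h1 h2 h3 hw hws b c hc k (by omega) (by omega)
        (hsk k hk (by omega)) (ih (by omega))
  exact this p hp.two_le le_rfl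

include hl hp hst in
lemma val_dvd (h1 : ∀ x : R, ∃ n : ℤ, l ∣ x - n) (h2 : ∀ n : ℤ, l ∣ (n : R) ↔ (p : ℤ) ∣ n)
    (hw : φ l = l * w) (hws : l ∣ w - s) (hs1 : 1 < s) (hsp : s < p)
    (a' c : R) (ha : ¬ l ∣ a') (v : ℕ) (hc : c ^ p = φ (l ^ v * a') * (l ^ v * a') ^ t) : p ∣ v := by
  have hwl : ¬ l ∣ w := by
    intro h
    have h7 : l ∣ ((s : ℤ) : R) := by
      have := h.sub hws
      simpa using this
    have := (h2 _).mp h7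
    have := Nat.le_of_dvd (by omega) (Int.natCast_dvd_natCast.mp this)
    omega
  have hφ : ¬ l ∣ φ a' := fun h => ha (by simpa using h.sub (phi_sub l φ w h1 hw a'))
  have e : c ^ p = l ^ (v * (t + 1)) * (w ^ v * φ a' * a' ^ t) := by
    rw [hc]; simp only [map_mul, map_pow, hw]; ring
  have hn : ¬ l ∣ w ^ v * φ a' * a' ^ t := by
    intro h
    rcases hl.dvd_or_dvd h with h | h
    · rcases hl.dvd_or_dvd h with h | h
      · exact hwl (hl.dvd_of_dvd_pow h)
      · exact hφ h
    · exact ha (hl.dvd_of_dvd_pow h)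
  have hm : emultiplicity l (c ^ p) = (v * (t + 1) : ℕ) := by
    rw [e, emultiplicity_mul hl, emultiplicity_pow_self_of_prime hl, emultiplicity_eq_zero.mpr hn, add_zero]
  rw [emultiplicity_pow hl] at hm
  have : emultiplicity l c ≠ ⊤ := by
    intro h
    rw [h] at hm
    rw [ENat.mul_top (by simpa using hp.ne_zero)] at hm
    exact absurd hm.symm (ENat.coe_ne_top _)
  obtain ⟨u, hu⟩ := ENat.ne_top_iff_exists.mp this
  rw [← hu] at hm
  have hm' : p * u = v * (t + 1) := by exact_mod_cast hm
  have : p ∣ v * (t + 1) := ⟨u, hm'.symm⟩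
  rcases hp.dvd_mul.mp this with h | h
  · exact h
  · have := Nat.le_of_dvd (by omega) h
    omega
end ring
end KW
end

section
open NumberField Polynomial

namespace KW
set_option linter.unusedSectionVars false
section cyc
variable {F : Type*} [Field F] [NumberField F] (p : ℕ) [hp : Fact p.Prime]
  [IsCyclotomicExtension {p} ℚ F] {ζ : F} (hζ : IsPrimitiveRoot ζ p)

include hζ
lemma cyc_h1 (x : 𝓞 F) : ∃ n : ℤ, hζ.toInteger - 1 ∣ x - n := by
  have hx : x ∈ Algebra.adjoin ℤ {hζ.toInteger} := by
    rw [IsCyclotomicExtension.Rat.adjoin_singleton_eq_top hζ]; trivial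
  induction hx using Algebra.adjoin_induction with
  | mem x hx => 
    rw [Set.mem_singleton_iff] at hx; subst hx
    exact ⟨1, by simp⟩
  | algebraMap r => exact ⟨r, by simp⟩
  | add x y _ _ hx hy =>
    obtain ⟨n, hn⟩ := hx
    obtain ⟨m, hm⟩ := hy
    exact ⟨n + m, by push_cast; convert hn.add hm using 1; ring⟩
  | mul x y _ _ hx hy =>
    obtain ⟨n, hn⟩ := hx
    obtain ⟨m, hm⟩ := hy
    exact ⟨n * m, by push_cast; convert (hn.mul_right y).add (hm.mul_left (n : 𝓞 F)) using 1; ring⟩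

lemma cyc_h2 (n : ℤ) : hζ.toInteger - 1 ∣ (n : 𝓞 F) ↔ (p : ℤ) ∣ n :=
  IsCyclotomicExtension.Rat.zeta_sub_one_dvd_intCast_iff' p hζ

lemma cyc_h3 : Associated ((hζ.toInteger - 1) ^ (p - 1)) (p : 𝓞 F) := 
  IsCyclotomicExtension.Rat.associated_zeta_sub_one_pow_prime p hζ

lemma cyc_prime : Prime (hζ.toInteger - 1) := hζ.zeta_sub_one_prime'

lemma cyc_w (g : Gal(F/ℚ)) (s : ℕ) (hg : g ζ = ζ ^ s) : ∃ w : 𝓞 F,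
    g • (hζ.toInteger - 1) = (hζ.toInteger - 1) * w ∧ hζ.toInteger - 1 ∣ w - s := by
  have hg' : g • hζ.toInteger = hζ.toInteger ^ s := by
    apply RingOfIntegers.coe_injective
    rw [map_pow]; exact hg
  refine ⟨∑ i ∈ Finset.range s, hζ.toInteger ^ i, ?_, ?_⟩
  · rw [smul_sub, smul_one, hg', mul_geom_sum]
  · have : (∑ i ∈ Finset.range s, hζ.toInteger ^ i) - (s : 𝓞 F) =
      ∑ i ∈ Finset.range s, (hζ.toInteger ^ i - 1) := by simp
    rw [this]
    exact Finset.dvd_sum fun i _ => by simpa using sub_dvd_pow_sub_pow hζ.toInteger 1 i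
end cyc

set_option linter.style.haveILetI false in
lemma cyc_aut {F : Type*} [Field F] [NumberField F] (n : ℕ) [NeZero n]
  [IsCyclotomicExtension {n} ℚ F] {ζ : F} (hζ : IsPrimitiveRoot ζ n) (u : (ZMod n)ˣ) :
  ∃ g : Gal(F/ℚ), g ζ = ζ ^ (u : ZMod n).val := by
  haveI : IsGalois ℚ F := IsCyclotomicExtension.isGalois {n} ℚ F
  have hinj : Function.Injective (hζ.autToPow ℚ) := IsPrimitiveRoot.autToPow_injective ℚ hζ 
  have hc : Nat.card Gal(F/ℚ) = Nat.card (ZMod n)ˣ := by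
    rw [IsGalois.card_aut_eq_finrank, IsCyclotomicExtension.Rat.finrank n F, Nat.card_eq_fintype_card, ZMod.card_units_eq_totient]
  have hb : Function.Bijective (hζ.autToPow ℚ) := (Nat.bijective_iff_injective_and_card _).mpr ⟨hinj, hc⟩
  obtain ⟨g, rfl⟩ := hb.2 u
  exact ⟨g, (hζ.autToPow_spec ℚ g).symm⟩

end KW
end

section
open NumberField Polynomial
set_option linter.unusedSectionVars false
set_option linter.style.haveILetI false

namespace KW

lemma root_conj {N : Type*} [Field N] (p : ℕ) [NeZero p] {z : N} (hz : IsPrimitiveRoot z p)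
    (x y : N) (hy : y ≠ 0) (h : x ^ p = y ^ p) : ∃ j < p, x = z ^ j * y := by
  obtain ⟨j, hj, h1⟩ := hz.eq_pow_of_pow_eq_one (ξ := x / y) (by
    rw [div_pow, h, div_self (pow_ne_zero _ hy)])
  exact ⟨j, hj, by rw [h1, div_mul_cancel₀ _ hy]⟩

section core
variable {F N : Type*} [Field F] [NumberField F] [Field N] [NumberField N] [Algebra F N]
  (p : ℕ) [hp : Fact p.Prime] [IsCyclotomicExtension {p} ℚ F] {ζ : F} (hζ : IsPrimitiveRoot ζ p)
  [IsGalois ℚ N] (hcomm : ∀ σ τ : Gal(N/ℚ), σ * τ = τ * σ)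

include hζ hcomm in
lemma exists_c (gF : Gal(F/ℚ)) (g : Gal(N/ℚ)) (hg : ∀ x : F, g (algebraMap F N x) = algebraMap F N (gF x))
    (s t : ℕ) (hst : s + t = p) (hs : gF ζ = ζ ^ s) (α : N) (hα : α ≠ 0) (a : 𝓞 F)
    (ha : α ^ p = algebraMap F N a) : ∃ c : 𝓞 F, c ^ p = (gF • a) * a ^ t := by
  haveI : IsGalois F N := IsGalois.tower_top_of_isGalois ℚ F N
  have hz : IsPrimitiveRoot (algebraMap F N ζ) p := hζ.map_of_injective (algebraMap F N).injective
  have hfix : ∀ τ : Gal(N/F), τ (g α * α ^ t) = g α * α ^ t := by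
    intro τ
    obtain ⟨j, -, hj⟩ := root_conj p hz (τ α) α hα (by rw [← map_pow, ha, τ.commutes])
    have h1 : τ (g α) = algebraMap F N ζ ^ (s * j) * g α := by
      have : (τ.restrictScalars ℚ) (g α) = g ((τ.restrictScalars ℚ) α) := 
        DFunLike.congr_fun (hcomm (τ.restrictScalars ℚ) g) α
      have h2 : τ (g α) = g (τ α) := this
      rw [h2, hj, map_mul, map_pow, hg, hs, map_pow, pow_mul]
    rw [map_mul, map_pow, h1, hj, mul_pow]
    have h3 : algebraMap F N ζ ^ (s * j) * (algebraMap F N ζ ^ j) ^ t = 1 := by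
      rw [← pow_mul, mul_comm j t, ← pow_add, ← add_mul, hst, pow_mul, hz.pow_eq_one, one_pow]
    linear_combination (g α * α ^ t) * h3
  obtain ⟨c, hc⟩ := (IsGalois.mem_range_algebraMap_iff_fixed (F := F) (g α * α ^ t)).mpr hfix
  have hcp : c ^ p = gF a * (a : F) ^ t := by
    apply (algebraMap F N).injective
    rw [map_pow, hc, mul_pow, ← map_pow, ha, hg, ← pow_mul, mul_comm t p, pow_mul, ha, map_mul, map_pow]
  have hci : IsIntegral ℤ c := by
    apply IsIntegral.of_pow hp.out.pos
    rw [hcp]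
    exact ((gF • a : 𝓞 F) * a ^ t : 𝓞 F).2
  let c' : 𝓞 F := ⟨c, hci⟩
  refine ⟨c', ?_⟩
  apply RingOfIntegers.coe_injective
  rw [map_pow, map_mul, map_pow]
  exact hcp

lemma coe_alg (x : 𝓞 F) : ((algebraMap (𝓞 F) (𝓞 N) x : 𝓞 N) : N) = algebraMap F N x := rfl

include hζ in
lemma final_fix (P : Ideal (𝓞 N)) (hP : P.IsMaximal) (hpP : (p : 𝓞 N) ∈ P)
    (g : Gal(N/ℚ)) (hg : g ∈ P.inertia Gal(N/ℚ)) (hgζ : g (algebraMap F N ζ) = algebraMap F N ζ)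
    (β : N) (b : 𝓞 F) (hb : β ^ p = algebraMap F N b) (hβ : β ≠ 0)
    (hlb : (hζ.toInteger - 1) ^ p ∣ b - 1) (hgb : g (β ^ p) = β ^ p) : g β = β := by
  have hz : IsPrimitiveRoot (algebraMap F N ζ) p := hζ.map_of_injective (algebraMap F N).injective
  set l : 𝓞 F := hζ.toInteger - 1 with hl
  set A := algebraMap (𝓞 F) (𝓞 N) with hA
  have hβi : IsIntegral ℤ β := by
    apply IsIntegral.of_pow hp.out.pos
    rw [hb]; exact (A b).2
  let B : 𝓞 N := ⟨β, hβi⟩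
  have hB : B ^ p = A b := by
    apply RingOfIntegers.coe_injective; rw [map_pow]; exact hb
  have hAl : A l = hz.toInteger - 1 := by
    rw [hl, map_sub, map_one]; rfl
  have hl0 : l ≠ 0 := (cyc_prime p hζ).ne_zero
  have hL0 : A l ≠ 0 := fun h => hl0 (by
    have h' := congrArg (fun z : 𝓞 N => (z : N)) h
    have h2 : algebraMap F N (l : F) = 0 := h'
    rw [map_eq_zero] at h2
    exact RingOfIntegers.coe_injective (by rw [map_zero]; exact h2))
  have hL0' : algebraMap F N (l : F) ≠ 0 := fun h => hL0 (RingOfIntegers.coe_injective (by rw [map_zero]; exact h))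
  obtain ⟨v, hv⟩ := cyc_h3 p hζ
  obtain ⟨x, hx⟩ := hlb
  obtain ⟨r, hr⟩ := exists_add_pow_prime_eq hp.out 1 (B - 1)
  have hpp : l ^ p = l ^ (p - 1) * l := by rw [← pow_succ, Nat.sub_add_cancel hp.out.one_le]
  have eq1 : (B - 1) ^ p = A l ^ p * A x - A l ^ (p - 1) * A v * (B - 1) * r := by
    have e1 : A b - 1 = A l ^ p * A x := by rw [← map_one A, ← map_sub, hx, map_mul, map_pow]
    have e2 : (p : 𝓞 N) = A l ^ (p - 1) * A v := by rw [← map_pow, ← map_mul, hv, map_natCast]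
    rw [add_sub_cancel, hB, e2] at hr
    linear_combination e1 - hr
  -- gamma
  let γ : N := (β - 1) / algebraMap F N l
  have hγ : IsIntegral (𝓞 N) γ := by
    refine ⟨X ^ p + (C (A v * r) * X - C (A x)), ?_, ?_⟩
    · apply monic_X_pow_add
      refine lt_of_le_of_lt (degree_sub_le _ _) ?_
      refine max_lt ?_ ?_
      · refine lt_of_le_of_lt (degree_C_mul_X_le _) ?_
        exact_mod_cast hp.out.one_lt
      · refine lt_of_le_of_lt degree_C_le ?_
        exact_mod_cast hp.out.pos
    · have e := congrArg (fun z : 𝓞 N => (z : N)) eq1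
      simp only [map_sub, map_mul, map_pow, map_one, coe_alg, A] at e
      have e' : (β - 1) ^ p = (algebraMap F N l) ^ p * algebraMap F N x -
        (algebraMap F N l) ^ (p-1) * algebraMap F N (v : 𝓞 F) * (β - 1) * r := e
      have hβγ : β - 1 = algebraMap F N l * γ := by simp only [γ]; field_simp
      rw [hβγ] at e'
      have hpp' : (algebraMap F N l) ^ p = (algebraMap F N l) ^ (p - 1) * (algebraMap F N l) := by
        rw [← pow_succ, Nat.sub_add_cancel hp.out.one_le]
      have : (algebraMap F N l) ^ p * (γ ^ p + algebraMap F N (v : 𝓞 F) * r * γ - algebraMap F N x) = 0 := by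
        rw [mul_pow] at e'
        linear_combination e' + hpp' * (algebraMap F N (v : 𝓞 F) * r * γ)
      have := (mul_eq_zero.mp this).resolve_left (pow_ne_zero _ hL0')
      simp only [eval₂_add, eval₂_sub, eval₂_mul, eval₂_X_pow, eval₂_C, eval₂_X, map_mul]
      rw [← add_sub_assoc]
      exact this
  have hγ' : IsIntegral ℤ γ := isIntegral_trans (R := ℤ) (A := 𝓞 N) γ hγ
  let G : 𝓞 N := ⟨γ, hγ'⟩
  have hG : A l * G = B - 1 := by
    apply RingOfIntegers.coe_injective
    rw [map_mul, map_sub _ B, map_one]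
    change algebraMap F N l * γ = β - 1
    simp only [γ]; field_simp
  have hgl : g • (A l) = A l := by
    apply RingOfIntegers.coe_injective
    rw [hAl]
    change g (algebraMap F N ζ - 1) = algebraMap F N ζ - 1
    rw [map_sub, hgζ, map_one]
  obtain ⟨j, hj, hjβ⟩ := root_conj p hz (g β) β hβ (by rw [← map_pow, hgb])
  have hgB : g • B = hz.toInteger ^ j * B := by
    apply RingOfIntegers.coe_injective
    rw [map_mul, map_pow]; exact hjβ
  have key : A l * (g • G - G) = (hz.toInteger ^ j - 1) * B := by
    have := congrArg (fun x => g • x) hG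
    simp only [smul_mul', smul_sub, smul_one, hgl, hgB] at this
    linear_combination this - hG
  by_cases hj0 : j = 0
  · rw [hjβ, hj0]; simp
  exfalso
  have hcop : j.Coprime p := ((hp.out.coprime_iff_not_dvd).mpr (Nat.not_dvd_of_pos_of_lt (Nat.pos_of_ne_zero hj0) hj)).symm
  obtain ⟨q, hq⟩ := (hz.toInteger_isPrimitiveRoot.associated_sub_one_pow_sub_one_of_coprime hcop)
  have hBP : B ∈ P := by
    rw [← hq, ← hAl] at key
    have : g • G - G = q * B := mul_left_cancel₀ hL0 (by rw [key]; ring)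
    have h1 : (q : 𝓞 N) * B ∈ P := this ▸ hg G
    exact (hP.isPrime.mem_or_mem h1).resolve_left (fun h => hP.ne_top (Ideal.eq_top_of_isUnit_mem _ h q.isUnit))
  have hLP : A l ∈ P := by
    have e2 : (p : 𝓞 N) = A l ^ (p - 1) * A v := by rw [← map_pow, ← map_mul, hv, map_natCast]
    rw [e2] at hpP
    rcases hP.isPrime.mem_or_mem hpP with h | h
    · exact hP.isPrime.mem_of_pow_mem _ h
    · exact absurd (Ideal.eq_top_of_isUnit_mem _ h (v.isUnit.map A)) hP.ne_top
  apply hP.ne_top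
  rw [Ideal.eq_top_iff_one]
  have h1 : A b ∈ P := hB ▸ P.pow_mem_of_mem hBP p hp.out.pos
  have h2 : A b - 1 ∈ P := by
    rw [← map_one A, ← map_sub, hx, hpp, mul_assoc, map_mul, map_mul]
    exact P.mul_mem_left _ (P.mul_mem_right _ hLP)
  simpa using P.sub_mem h1 h2

end core
end KW
end

section
open NumberField Polynomial
set_option linter.unusedSectionVars false
set_option linter.style.haveILetI false

namespace KW

lemma exists_gen (p : ℕ) [hp : Fact p.Prime] (hp2 : p ≠ 2) : ∃ u : (ZMod p)ˣ, 
    1 < (u : ZMod p).val ∧ ∀ k, 2 ≤ k → k < p → ¬ (p : ℤ) ∣ ((u : ZMod p).val : ℤ) ^ k - ((u : ZMod p).val : ℤ) := by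
  obtain ⟨u, hu⟩ := IsCyclic.exists_generator (α := (ZMod p)ˣ)
  have ho : orderOf u = p - 1 := by
    rw [orderOf_eq_card_of_forall_mem_zpowers hu, Nat.card_eq_fintype_card, ZMod.card_units]
  have h2 : 2 < p := lt_of_le_of_ne hp.out.two_le (Ne.symm hp2)
  refine ⟨u, ?_, ?_⟩
  · by_contra h
    have h0 : (u : ZMod p).val ≠ 0 := by
      rw [Ne, ZMod.val_eq_zero]; exact u.ne_zero
    have h1 : (u : ZMod p).val = 1 := by omega
    have : (u : ZMod p) = 1 := by
      apply ZMod.val_injective p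
      rw [h1, ZMod.val_one]
    have : u = 1 := Units.ext this
    rw [this, orderOf_one] at ho
    omega
  · intro k hk hkp h
    rw [← ZMod.intCast_zmod_eq_zero_iff_dvd] at h
    push_cast at h
    rw [ZMod.natCast_zmod_val, sub_eq_zero] at h
    have h3 : u ^ k = u ^ 1 := by ext; push_cast; simpa using h
    rw [pow_eq_pow_iff_modEq, ho] at h3
    have := (Nat.modEq_iff_dvd' (by omega : 1 ≤ k)).mp h3.symm
    have := Nat.le_of_dvd (by omega) this
    omega

section core
lemma ocoe_mul {F : Type*} [Field F] (x y : 𝓞 F) : ((x * y : 𝓞 F) : F) = x * y := rfl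
lemma ocoe_pow {F : Type*} [Field F] (x : 𝓞 F) (n : ℕ) : ((x ^ n : 𝓞 F) : F) = (x : F) ^ n := rfl
lemma ocoe_zero {F : Type*} [Field F] : ((0 : 𝓞 F) : F) = 0 := rfl

variable {F N : Type*} [Field F] [NumberField F] [Field N] [NumberField N] [Algebra F N]
  (p : ℕ) [hp : Fact p.Prime] [IsCyclotomicExtension {p} ℚ F] {ζ : F} (hζ : IsPrimitiveRoot ζ p)
  [IsGalois ℚ N] (hcomm : ∀ σ τ : Gal(N/ℚ), σ * τ = τ * σ) (hp2 : p ≠ 2)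

include hζ hcomm hp2 in
theorem core_odd (z2 : N) (hz2 : z2 ^ p = algebraMap F N ζ) (P : Ideal (𝓞 N)) (hP : P.IsMaximal)
    (hpP : (p : 𝓞 N) ∈ P) (g : Gal(N/ℚ)) (hg : g ∈ P.inertia Gal(N/ℚ)) (hgz : g z2 = z2)
    (hgF : ∀ x : F, g (algebraMap F N x) = algebraMap F N x)
    (α : N) (a0 : F) (ha0 : α ^ p = algebraMap F N a0) : g α = α := by
  haveI : IsGalois ℚ F := IsCyclotomicExtension.isGalois {p} ℚ F
  obtain ⟨u, hs1, hsk⟩ := exists_gen p hp2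
  set s := (u : ZMod p).val with hs
  have hsp : s < p := ZMod.val_lt _
  obtain ⟨t, hst⟩ := Nat.exists_eq_add_of_lt hsp
  replace hst : s + (t + 1) = p := by omega
  obtain ⟨gF, hgs⟩ := cyc_aut p hζ u
  obtain ⟨w, hw, hws⟩ := cyc_w p hζ gF s hgs
  let σ : Gal(N/ℚ) := gF.liftNormal N
  have hσ : ∀ x : F, σ (algebraMap F N x) = algebraMap F N (gF x) := gF.liftNormal_commutes N
  set l := hζ.toInteger - 1 with hl
  have hlp : Prime l := cyc_prime p hζ
  let φ : 𝓞 F →+* 𝓞 F := MulSemiringAction.toRingHom Gal(F/ℚ) (𝓞 F) gF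
  have hφ : ∀ x, φ x = gF • x := fun x => rfl
  have h1 := cyc_h1 p hζ
  have h2 := cyc_h2 p hζ
  -- case b ≡ 1 mod l^2
  have caseB : ∀ (β : N) (b : 𝓞 F), β ≠ 0 → β ^ p = algebraMap F N b → l ^ 2 ∣ b - 1 → g β = β := by
    intro β b hβ hb hlb
    obtain ⟨c, hc⟩ := exists_c p hζ hcomm gF σ hσ s (t+1) hst hgs β hβ b hb
    have := step_all l hlp p hp.out φ s (t+1) hst w h1 h2 (cyc_h3 p hζ).dvd hw hws b c hc hsk hlb
    refine final_fix p hζ P hP hpP g hg (hgF _) β b hb hβ this ?_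
    rw [hb, hgF]
  have caseU : ∀ (α : N) (a : 𝓞 F), α ≠ 0 → α ^ p = algebraMap F N a → ¬ l ∣ a → g α = α := by
    intro α a hα ha hla
    have e1 : l ∣ a ^ (p - 1) - 1 := by
      have := pow_p_sub l p hp.out h1 h2 a
      have h3 : a ^ p - a = a * (a ^ (p - 1) - 1) := by
        rw [mul_sub, ← pow_succ', Nat.sub_add_cancel hp.out.one_le, mul_one]
      rw [h3] at this
      exact (hlp.dvd_or_dvd this).resolve_left hla
    obtain ⟨e, he⟩ := e1
    obtain ⟨n, f, hn⟩ := h1 e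
    let i : ℕ := ((-n) % (p : ℤ)).toNat
    have hpz : (p : ℤ) ≠ 0 := by exact_mod_cast hp.out.ne_zero
    have hi : (p : ℤ) ∣ n + i := by
      have : (i : ℤ) = (-n) % p := Int.toNat_of_nonneg (Int.emod_nonneg _ hpz)
      rw [this]
      have h := Int.emod_add_mul_ediv (-n) p
      exact ⟨-((-n) / p), by linarith⟩
    obtain ⟨f2, hf2⟩ := (h2 _).mpr hi
    push_cast at hf2
    obtain ⟨f3, hf3⟩ := pow_lin l 1 le_rfl 1 i
    rw [pow_one, mul_one] at hf3
    have hz1 : hζ.toInteger = 1 + l := by rw [hl]; ring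
    have hb : l ^ 2 ∣ a ^ (p - 1) * hζ.toInteger ^ i - 1 := by
      have e1 : a ^ (p - 1) = 1 + l * (n + l * f) := by linear_combination he + l * hn
      have e2 : hζ.toInteger ^ i = 1 + i * l + l ^ 2 * f3 := by rw [hz1]; linear_combination hf3
      rw [e1, e2]
      refine ⟨f2 + f3 + f + n * i + n * l * f3 + l * f * i + l * l * f * f3, ?_⟩
      linear_combination l * hf2
    have hz0 : z2 ≠ 0 := by
      rintro rfl
      rw [zero_pow hp.out.ne_zero] at hz2
      exact hζ.ne_zero hp.out.ne_zero ((map_eq_zero _).mp hz2.symm)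
    have := caseB (α ^ (p - 1) * z2 ^ i) (a ^ (p - 1) * hζ.toInteger ^ i)
      (mul_ne_zero (pow_ne_zero _ hα) (pow_ne_zero _ hz0)) (by
        rw [ocoe_mul, ocoe_pow, ocoe_pow, mul_pow, ← pow_mul, mul_comm (p-1) p, pow_mul, ha, ← pow_mul,
          mul_comm i p, pow_mul, hz2, map_mul, map_pow, map_pow]
        rfl) hb
    rw [map_mul, map_pow, map_pow, hgz] at this
    have h5 := mul_right_cancel₀ (pow_ne_zero _ hz0) this
    have h6 : g α ^ p = α ^ p := by rw [← map_pow, ha, hgF]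
    have h7 : g α ^ p = g α ^ (p - 1) * g α := by rw [← pow_succ, Nat.sub_add_cancel hp.out.one_le]
    have h8 : α ^ p = α ^ (p - 1) * α := by rw [← pow_succ, Nat.sub_add_cancel hp.out.one_le]
    rw [h7, h8, h5] at h6
    exact mul_left_cancel₀ (pow_ne_zero _ hα) h6
  by_cases hα : α = 0
  · simp [hα]
  have hl0 : algebraMap F N l ≠ 0 := by
    intro h
    apply hlp.ne_zero
    apply RingOfIntegers.coe_injective
    rw [map_zero]; exact (map_eq_zero _).mp h
  have caseI : ∀ (α : N) (a : 𝓞 F), α ≠ 0 → α ^ p = algebraMap F N a → g α = α := by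
    intro α a hα ha
    have ha0 : a ≠ 0 := by
      rintro rfl
      rw [ocoe_zero, map_zero] at ha
      exact hα (pow_eq_zero_iff hp.out.ne_zero |>.mp ha)
    obtain ⟨v, a', hla, rfl⟩ := WfDvdMonoid.max_power_factor ha0 hlp.irreducible
    obtain ⟨c, hc⟩ := exists_c p hζ hcomm gF σ hσ s (t+1) hst hgs α hα _ ha
    obtain ⟨k, rfl⟩ := val_dvd l hlp p hp.out φ s (t+1) hst w h1 h2 hw hws hs1 hsp a' c hla v hc
    have := caseU (α / (algebraMap F N l) ^ k) a' (div_ne_zero hα (pow_ne_zero _ hl0)) (by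
      rw [div_pow, ha, ocoe_mul, ocoe_pow, map_mul, map_pow, ← pow_mul, mul_comm k p]
      field_simp) hla
    rw [map_div₀, map_pow, hgF] at this
    exact (div_left_inj' (pow_ne_zero _ hl0)).mp this
  obtain ⟨m, hm0, hm⟩ := IsAlgebraic.exists_integral_multiple (R := ℤ) (z := a0)
    (IsFractionRing.isAlgebraic_iff ℤ ℚ F |>.mpr (.of_finite ℚ a0)) 
  let a1 : 𝓞 F := ⟨m • a0, hm⟩
  have := caseI (m * α) (m ^ (p - 1) * a1) (mul_ne_zero (by exact_mod_cast hm0) hα) (by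
    have e : ((m ^ (p - 1) * a1 : 𝓞 F) : F) = m ^ p * a0 := by
      rw [ocoe_mul, ocoe_pow]
      change (m : F) ^ (p - 1) * (m • a0) = _
      rw [zsmul_eq_mul, ← mul_assoc, ← pow_succ, Nat.sub_add_cancel hp.out.one_le]
    rw [e, mul_pow, ha0, map_mul, map_pow, map_intCast])
  rw [map_mul, map_intCast] at this
  exact mul_left_cancel₀ (by exact_mod_cast hm0) this

end core
end KW
end

section
open NumberField Polynomial
set_option linter.unusedSectionVars false
set_option linter.style.haveILetI false

namespace KW
section two
variable {N : Type*} [Field N] [NumberField N]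

lemma two_one (P : Ideal (𝓞 N)) (hP : P.IsMaximal) (hpP : (2 : 𝓞 N) ∈ P)
    (g : Gal(N/ℚ)) (hg : g ∈ P.inertia Gal(N/ℚ)) (β : N) (k : ℤ) (h : β ^ 2 = 4 * k + 1) : g β = β := by
  have hβi : IsIntegral ℤ β := by
    apply IsIntegral.of_pow (n := 2) (by norm_num)
    rw [h, show (4 * k + 1 : N) = ((4 * k + 1 : ℤ) : N) by push_cast; rfl]
    exact isIntegral_algebraMap
  let γ : N := (β - 1) / 2
  have hγ : IsIntegral ℤ γ := by
    refine ⟨X ^ 2 + (X - C k), ?_, ?_⟩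
    · apply monic_X_pow_add
      refine lt_of_le_of_lt (degree_sub_le _ _) ?_
      refine max_lt ?_ ?_
      · rw [degree_X]; norm_num
      · refine lt_of_le_of_lt degree_C_le ?_
        norm_num
    · simp only [eval₂_add, eval₂_sub, eval₂_X_pow, eval₂_C, eval₂_X, γ]
      rw [eq_intCast]
      linear_combination h / 4
  let B : 𝓞 N := ⟨β, hβi⟩
  let G : 𝓞 N := ⟨γ, hγ⟩
  have hG : 2 * G = B - 1 := by
    apply RingOfIntegers.coe_injective
    rw [map_mul, map_sub _ B, map_one, map_ofNat]
    change 2 * γ = β - 1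
    simp only [γ]; ring
  have hB : B ^ 2 = 4 * k + 1 := by
    apply RingOfIntegers.coe_injective
    rw [map_add, map_mul, map_one, map_ofNat, map_pow, map_intCast]
    exact h
  have : g β ^ 2 = β ^ 2 := by
    rw [← map_pow, h, map_add, map_mul, map_one, map_intCast]; erw [map_ofNat g 4]
  rcases sq_eq_sq_iff_eq_or_eq_neg.mp this with h1 | h1
  · exact h1
  exfalso
  have hgB : g • B = - B := by
    apply RingOfIntegers.coe_injective
    rw [map_neg]; exact h1
  have key : 2 * (g • G - G) = 2 * (- B) := by
    have := congrArg (fun x => g • x) hG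
    have h2 : g • (2 : 𝓞 N) = 2 := by
      apply RingOfIntegers.coe_injective
      rw [map_ofNat]; change g (2 : N) = 2
      exact map_ofNat g 2
    simp only [smul_mul', smul_sub, smul_one, hgB, h2] at this
    linear_combination this - hG
  have h3 := mul_left_cancel₀ two_ne_zero key
  have hBP : B ∈ P := by
    have := hg G
    rw [h3] at this; simpa using this
  apply hP.ne_top
  rw [Ideal.eq_top_iff_one]
  have h4 : B * B - 2 * (2 * k) ∈ P := P.sub_mem (P.mul_mem_left _ hBP) (P.mul_mem_right _ hpP)
  convert h4 using 1
  linear_combination -hB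

theorem core_two (P : Ideal (𝓞 N)) (hP : P.IsMaximal) (hpP : (2 : 𝓞 N) ∈ P)
    (g : Gal(N/ℚ)) (hg : g ∈ P.inertia Gal(N/ℚ)) (i r : N) (hi : i ^ 2 = -1) (hr : r ^ 2 = 2)
    (hgi : g i = i) (hgr : g r = r) (α : N) (a : ℚ) (ha : α ^ 2 = algebraMap ℚ N a) : g α = α := by
  have hi0 : i ≠ 0 := by rintro rfl; norm_num at hi
  have hr0 : r ≠ 0 := by rintro rfl; norm_num at hr
  have caseOdd : ∀ (α : N) (k : ℤ), α ^ 2 = 2 * k + 1 → g α = α := by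
    intro α k h
    rcases Int.even_or_odd' k with ⟨j, rfl | rfl⟩
    · exact two_one P hP hpP g hg α j (by rw [h]; push_cast; ring)
    · have := two_one P hP hpP g hg (i * α) (-j-1) (by rw [mul_pow, h, hi]; push_cast; ring)
      rw [map_mul, hgi] at this
      exact mul_left_cancel₀ hi0 this
  have caseI : ∀ (n : ℕ) (α : N) (m : ℤ), m ≠ 0 → m.natAbs ≤ n → α ^ 2 = m → g α = α := by
    intro n
    induction n with
    | zero => intro α m hm h; omega
    | succ n ih =>
      intro α m hm hmn h
      rcases Int.even_or_odd' m with ⟨j, rfl | rfl⟩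
      · have := ih (α / r) j (by omega) (by omega) (by rw [div_pow, h, hr]; push_cast; field_simp)
        rw [map_div₀, hgr] at this
        exact (div_left_inj' hr0).mp this
      · exact caseOdd α j (by rw [h]; push_cast; ring)
  by_cases hα : α = 0
  · simp [hα]
  have hd : (a.den : N) ≠ 0 := by exact_mod_cast a.den_ne_zero
  have ha' : algebraMap ℚ N a = a.num / a.den := by
    rw [eq_ratCast, Rat.cast_def]
  have := caseI _ (a.den * α) (a.num * a.den) (mul_ne_zero (by
    intro h; rw [h] at ha'; simp at ha'; rw [ha'] at ha; simp at ha; exact hα ha) (by exact_mod_cast a.den_ne_zero)) le_rfl (by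
      rw [mul_pow, ha, ha']; push_cast; field_simp)
  rw [map_mul, map_natCast] at this
  exact mul_left_cancel₀ hd this
end two
end KW
end

section
open NumberField Polynomial
set_option linter.unusedSectionVars false
set_option linter.style.haveILetI false

namespace KW

lemma kummer {F N : Type*} [Field F] [Field N] [Algebra F N] [FiniteDimensional F N] [IsGalois F N]
    (p : ℕ) [hp : Fact p.Prime] (z : F) (hz : IsPrimitiveRoot z p)
    (T : Subgroup Gal(N/F)) [T.Normal] (hT : T.index = p) :
    ∃ (α : N) (a : F), α ^ p = algebraMap F N a ∧ ∀ g : Gal(N/F), g α = α → g ∈ T := by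
  let E := IntermediateField.fixedField T
  have hfr : Module.finrank F E = p := by
    rw [IntermediateField.finrank_eq_fixingSubgroup_index, IntermediateField.fixingSubgroup_fixedField, hT]
  haveI : IsCyclic Gal(E/F) := isCyclic_of_prime_card (p := p) (by
    rw [IsGalois.card_aut_eq_finrank, hfr])
  obtain ⟨α, ⟨a, ha⟩, htop⟩ := exists_root_adjoin_eq_top_of_isCyclic F E (by
    rw [hfr]; exact ⟨z, (mem_primitiveRoots hp.out.pos).mpr hz⟩)
  rw [hfr] at ha
  refine ⟨α, a, ?_, ?_⟩
  · have := congrArg (fun x : E => (x : N)) ha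
    exact this.symm
  · intro g hg
    rw [← IntermediateField.fixingSubgroup_fixedField T, IntermediateField.mem_fixingSubgroup_iff]
    intro x hx
    have hx' : (⟨x, hx⟩ : E) ∈ IntermediateField.adjoin F {α} := by rw [htop]; trivial
    have := IntermediateField.adjoin_le_iff (F := F) (E := E) (S := {α})
      (T := (IntermediateField.fixedField (Subgroup.zpowers g)).comap (IsScalarTower.toAlgHom F E N)) |>.mpr (by
        intro x hx
        rw [Set.mem_singleton_iff] at hx
        rw [hx]
        change (α : N) ∈ IntermediateField.fixedField (Subgroup.zpowers g)
        rintro ⟨h, n, rfl⟩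
        have : ∀ n : ℤ, (g ^ n) (α : N) = α := by
          intro n
          have : g ^ n ∈ MulAction.stabilizer Gal(N/F) (α : N) := Subgroup.zpow_mem _ hg n
          exact this
        exact this n)
    have h2 := this hx'
    exact h2 ⟨g, Subgroup.mem_zpowers g⟩

lemma exists_index_p {G : Type*} [Group G] [Finite G] (p : ℕ) [hp : Fact p.Prime] (hG : IsPGroup p G)
    (H : Subgroup G) (hH : H ≠ ⊤) : ∃ T : Subgroup G, H ≤ T ∧ T.index = p := by
  obtain ⟨k, hk⟩ := IsPGroup.iff_card.mp hG
  obtain ⟨j, hj⟩ := IsPGroup.iff_card.mp (hG.to_subgroup H)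
  have hlt : Nat.card H < Nat.card G := by
    refine lt_of_le_of_ne (Nat.card_le_card_of_injective _ H.subtype_injective) ?_
    intro h; exact hH (Subgroup.eq_top_of_card_eq _ h)
  rw [hj, hk] at hlt
  have hjk : j < k := (Nat.pow_lt_pow_iff_right hp.out.one_lt).mp hlt
  obtain ⟨T, hT, hle⟩ := Sylow.exists_subgroup_card_pow_prime_le (G := G) p (n := j) (m := k - 1)
    (by rw [hk]; exact pow_dvd_pow p (by omega)) H hj (by omega)
  refine ⟨T, hle, ?_⟩
  have := T.card_mul_index
  rw [hT, hk] at this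
  have h2 : p ^ k = p ^ (k - 1) * p := by rw [← pow_succ]; congr 1; omega
  rw [h2] at this
  exact Nat.eq_of_mul_eq_mul_left (pow_pos hp.out.pos _) this

lemma normal_of_comm {G : Type*} [Group G] (h : ∀ a b : G, a * b = b * a) (T : Subgroup G) : T.Normal :=
  ⟨fun n hn g => by rw [h g n, mul_inv_cancel_right]; exact hn⟩

theorem bound_odd {F N : Type*} [Field F] [NumberField F] [Field N] [NumberField N] [Algebra F N]
    (p : ℕ) [hp : Fact p.Prime] [IsCyclotomicExtension {p} ℚ F] 
    [IsGalois ℚ N] (hcomm : ∀ σ τ : Gal(N/ℚ), σ * τ = τ * σ) (hp2 : p ≠ 2)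
    (P : Ideal (𝓞 N)) (hP : P.IsMaximal) (hpP : (p : 𝓞 N) ∈ P) (hI : P.inertia Gal(N/ℚ) = ⊤)
    (ζ : F) (z2 : N) (hz2 : IsPrimitiveRoot z2 (p ^ 2)) (hz2' : z2 ^ p = algebraMap F N ζ)
    (m : ℕ) (hexp : ∀ g : Gal(N/F), g ^ (p ^ m) = 1) : Module.finrank ℚ N ≤ p ^ m * (p - 1) := by
  haveI : IsGalois F N := IsGalois.tower_top_of_isGalois ℚ F N
  have hz : IsPrimitiveRoot (algebraMap F N ζ) p := by
    rw [← hz2']; exact hz2.pow (pow_pos hp.out.pos 2) (by rw [pow_two])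
  have hζ : IsPrimitiveRoot ζ p := hz.of_map_of_injective (algebraMap F N).injective
  have hz0 : z2 ≠ 0 := hz2.ne_zero (pow_ne_zero _ hp.out.ne_zero)
  have hfrF : Module.finrank ℚ F = p - 1 := by
    rw [IsCyclotomicExtension.Rat.finrank p F, Nat.totient_prime hp.out]
  have hpg : IsPGroup p Gal(N/F) := fun g => ⟨m, hexp g⟩
  have hcommF : ∀ σ τ : Gal(N/F), σ * τ = τ * σ := by
    intro σ τ
    ext x
    exact DFunLike.congr_fun (hcomm (σ.restrictScalars ℚ) (τ.restrictScalars ℚ)) x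
  -- an element moving z2
  obtain ⟨g, hg⟩ : ∃ g : Gal(N/F), g z2 ≠ z2 := by
    by_contra! hcon
    obtain ⟨y, rfl⟩ := (IsGalois.mem_range_algebraMap_iff_fixed (F := F) z2).mpr hcon
    have hy : IsPrimitiveRoot y (p ^ 2) := hz2.of_map_of_injective (algebraMap F N).injective
    have h1 : (cyclotomic (p ^ 2) ℚ).natDegree ≤ Module.finrank ℚ F := by
      rw [cyclotomic_eq_minpoly_rat hy (pow_pos hp.out.pos 2)]
      exact minpoly.natDegree_le y
    rw [natDegree_cyclotomic, hfrF, Nat.totient_prime_pow hp.out (by norm_num)] at h1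
    have := hp.out.two_le
    have h3 : 0 < p - 1 := by omega
    simp only [Nat.add_one_sub_one, pow_one] at h1
    nlinarith
  have hconj : ∀ h : Gal(N/F), ∃ j < p, h z2 = algebraMap F N ζ ^ j * z2 := fun h =>
    root_conj p hz (h z2) z2 hz0 (by rw [← map_pow, hz2', h.commutes])
  have htop : Subgroup.zpowers g = ⊤ := by
    by_contra hne
    obtain ⟨T, hgT, hTi⟩ := exists_index_p p hpg _ hne
    haveI := normal_of_comm hcommF T
    obtain ⟨α, a, ha, hα⟩ := kummer p ζ hζ T hTi
    have hV : ∀ h : Gal(N/F), h z2 = z2 → h ∈ T := by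
      intro h hh
      apply hα
      exact core_odd p hζ hcomm hp2 z2 hz2' P hP hpP (h.restrictScalars ℚ) (by rw [hI]; trivial) hh
        (fun x => h.commutes x) α a ha
    have : T = ⊤ := by
      rw [eq_top_iff]
      intro h _
      obtain ⟨j, -, hj⟩ := hconj h
      obtain ⟨k, hk, hgk⟩ := hconj g
      have hk0 : k ≠ 0 := by rintro rfl; apply hg; rw [hgk]; simp
      have hkc : Nat.gcd k p = 1 := ((hp.out.coprime_iff_not_dvd).mpr (Nat.not_dvd_of_pos_of_lt (Nat.pos_of_ne_zero hk0) hk)).symm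
      have hpow : ∀ n : ℕ, (g ^ n) z2 = algebraMap F N ζ ^ (n * k) * z2 := by
        intro n
        induction n with
        | zero => simp
        | succ n ih =>
          rw [pow_succ', AlgEquiv.mul_apply, ih, map_mul, map_pow, g.commutes, hgk, add_mul, one_mul, pow_add]
          ring
      obtain ⟨n, hn⟩ : ∃ n : ℕ, algebraMap F N ζ ^ (n * k) = algebraMap F N ζ ^ j := by
        obtain ⟨u, -, hu⟩ := Nat.exists_mul_mod_eq_one_of_coprime hkc hp.out.one_lt
        refine ⟨u * j, ?_⟩
        refine pow_eq_pow_of_modEq ?_ hz.pow_eq_one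
        have : k * u ≡ 1 [MOD p] := by rw [Nat.ModEq, hu, Nat.mod_eq_of_lt hp.out.one_lt]
        calc u * j * k = k * u * j := by ring
          _ ≡ 1 * j [MOD p] := this.mul_right j
          _ = j := one_mul j
      have h1 : (g ^ n)⁻¹ * h ∈ T := by
        apply hV
        have h2 : (g ^ n) z2 = h z2 := by rw [hpow, hn, hj]
        rw [AlgEquiv.mul_apply, ← h2, ← AlgEquiv.mul_apply, inv_mul_cancel, AlgEquiv.one_apply]
      have h3 : g ^ n ∈ T := T.pow_mem (hgT (Subgroup.mem_zpowers g)) n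
      have := T.mul_mem h3 h1
      simpa using this
    rw [this, Subgroup.index_top] at hTi
    exact hp.out.one_lt.ne hTi
  have hcard : Nat.card Gal(N/F) ≤ p ^ m := by
    have := orderOf_le_of_pow_eq_one (pow_pos hp.out.pos m) (hexp g)
    rw [← Nat.card_zpowers, htop, Subgroup.card_top] at this
    exact this
  rw [IsGalois.card_aut_eq_finrank] at hcard
  rw [← Module.finrank_mul_finrank ℚ F N, hfrF, mul_comm]
  exact Nat.mul_le_mul_right _ hcard

theorem bound_two {N : Type*} [Field N] [NumberField N] 
    [IsGalois ℚ N] (hcomm : ∀ σ τ : Gal(N/ℚ), σ * τ = τ * σ)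
    (P : Ideal (𝓞 N)) (hP : P.IsMaximal) (hpP : (2 : 𝓞 N) ∈ P) (hI : P.inertia Gal(N/ℚ) = ⊤)
    (i r : N) (hi : i ^ 2 = -1) (hr : r ^ 2 = 2)
    (m : ℕ) (hexp : ∀ g : Gal(N/ℚ), g ^ (2 ^ m) = 1) : Module.finrank ℚ N ≤ 2 ^ (m + 1) := by
  have hpg : IsPGroup 2 Gal(N/ℚ) := fun g => ⟨m, hexp g⟩
  let φ : N →+* ℂ := (Classical.arbitrary (N →+* ℂ))
  obtain ⟨c, hc⟩ := NumberField.ComplexEmbedding.exists_comp_symm_eq_of_comp_eq (k := ℚ) φ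
    ((starRingEnd ℂ).comp φ) (Subsingleton.elim _ _)
  replace hc : ∀ x, φ (c⁻¹ x) = starRingEnd ℂ (φ x) := fun x => RingHom.congr_fun hc x
  set d := c⁻¹ with hd
  have hd2 : d ^ 2 = 1 := by
    ext x
    apply φ.injective
    rw [pow_two, AlgEquiv.mul_apply, hc, hc]; simp
  have hi0 : i ≠ 0 := by rintro rfl; norm_num at hi
  have hr0 : r ≠ 0 := by rintro rfl; norm_num at hr
  have hdi : d i = - i := by
    have : d i ^ 2 = i ^ 2 := by rw [← map_pow, hi, map_neg, map_one]
    rcases sq_eq_sq_iff_eq_or_eq_neg.mp this with h | h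
    · exfalso
      have h1 := hc i
      rw [h] at h1
      obtain ⟨y, hy⟩ := Complex.conj_eq_iff_real.mp h1.symm
      have h2 := congrArg φ hi
      rw [map_pow, hy, map_neg, map_one] at h2
      have h3 : y ^ 2 = -1 := by exact_mod_cast h2
      nlinarith [sq_nonneg y]
    · exact h
  have hdr : d r = r := by
    have h2e : ∀ g : Gal(N/ℚ), g 2 = 2 := fun g => map_ofNat g 2
    have : d r ^ 2 = r ^ 2 := by rw [← map_pow, hr, h2e]
    rcases sq_eq_sq_iff_eq_or_eq_neg.mp this with h | h
    · exact h
    · exfalso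
      have h1 := hc r
      rw [h, map_neg] at h1
      have hre : (φ r).re = 0 := by
        have := congrArg Complex.re h1
        simp at this; linarith
      have h2 := congrArg φ hr
      rw [map_pow, map_ofNat] at h2
      have h3 := congrArg Complex.re h2
      rw [pow_two, Complex.mul_re, hre] at h3
      simp at h3
      nlinarith [sq_nonneg (φ r).im]
  obtain ⟨g, hg⟩ : ∃ g : Gal(N/ℚ), g r ≠ r := by
    by_contra! hcon
    obtain ⟨y, rfl⟩ := (IsGalois.mem_range_algebraMap_iff_fixed (F := ℚ) r).mpr hcon
    have h1 : y ^ 2 = 2 := by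
      apply (algebraMap ℚ N).injective
      rw [map_pow, hr, map_ofNat]
    have h2 : IsSquare (2 : ℚ) := ⟨y, by rw [← h1, pow_two]⟩
    have h3 : IsSquare (2 : ℕ) := by
      rw [← Rat.isSquare_natCast_iff]; exact_mod_cast h2
    obtain ⟨k, hk⟩ := h3
    have : k < 2 := by nlinarith
    interval_cases k <;> omega
  have hr' : ∀ g : Gal(N/ℚ), g r = r ∨ g r = - r := fun g => by
    have h2e : g 2 = 2 := map_ofNat g 2
    exact sq_eq_sq_iff_eq_or_eq_neg.mp (by rw [← map_pow, hr, h2e])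
  have hi' : ∀ g : Gal(N/ℚ), g i = i ∨ g i = - i := fun g => 
    sq_eq_sq_iff_eq_or_eq_neg.mp (by rw [← map_pow, hi, map_neg, map_one])
  have hgr := (hr' g).resolve_left hg
  have htop : Subgroup.zpowers d ⊔ Subgroup.zpowers g = ⊤ := by
    by_contra hne
    haveI : Fact (Nat.Prime 2) := ⟨Nat.prime_two⟩
    obtain ⟨T, hgT, hTi⟩ := exists_index_p 2 hpg _ hne
    have hdT : d ∈ T := hgT (Subgroup.mem_sup_left (Subgroup.mem_zpowers d))
    have hggT : g ∈ T := hgT (Subgroup.mem_sup_right (Subgroup.mem_zpowers g))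
    haveI := normal_of_comm hcomm T
    obtain ⟨α, a, ha, hα⟩ := kummer 2 (-1 : ℚ) (IsPrimitiveRoot.neg_one 0 (by norm_num)) T hTi
    have hV : ∀ h : Gal(N/ℚ), h i = i → h r = r → h ∈ T := by
      intro h hh1 hh2
      apply hα
      exact core_two P hP hpP h (by rw [hI]; trivial) i r hi hr hh1 hh2 α a ha
    have hV2 : ∀ h : Gal(N/ℚ), h r = r → h ∈ T := by
      intro h hh
      rcases hi' h with h1 | h1
      · exact hV h h1 hh
      · have : d * h ∈ T := hV _ (by rw [AlgEquiv.mul_apply, h1, map_neg, hdi, neg_neg])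
          (by rw [AlgEquiv.mul_apply, hh, hdr])
        exact (T.mul_mem_cancel_left hdT).mp this
    have : T = ⊤ := by
      rw [eq_top_iff]
      intro h _
      rcases hr' h with h1 | h1
      · exact hV2 h h1
      · have : g * h ∈ T := hV2 _ (by rw [AlgEquiv.mul_apply, h1, map_neg, hgr, neg_neg])
        exact (T.mul_mem_cancel_left hggT).mp this
    rw [this, Subgroup.index_top] at hTi
    norm_num at hTi
  rw [← IsGalois.card_aut_eq_finrank, ← Subgroup.card_top, ← htop]
  haveI := normal_of_comm hcomm (Subgroup.zpowers g)
  have h1 : Nat.card (Subgroup.zpowers d ⊔ Subgroup.zpowers g : Subgroup Gal(N/ℚ)) ≤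
      Nat.card (Subgroup.zpowers d) * Nat.card (Subgroup.zpowers g) := by
    rw [← SetLike.coe_sort_coe, Subgroup.mul_normal]
    exact Set.natCard_mul_le
  refine h1.trans ?_
  rw [Nat.card_zpowers, Nat.card_zpowers, pow_succ, mul_comm]
  exact Nat.mul_le_mul (orderOf_le_of_pow_eq_one (by positivity) (hexp g)) (orderOf_le_of_pow_eq_one (by norm_num) hd2)
end KW
end

section
open NumberField Polynomial
set_option linter.unusedSectionVars false
set_option linter.style.haveILetI false

namespace KW
variable {M : Type*} [Field M] [NumberField M]

lemma natCast_not_mem {R : Type*} [CommRing R] (P : Ideal R) (hP : P ≠ ⊤) (q r : ℕ) (hq : (q : R) ∈ P)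
    (hc : r.Coprime q) : (r : R) ∉ P := by
  intro hr
  obtain ⟨a, b, hab⟩ := Nat.isCoprime_iff_coprime.mpr hc
  have hab' := congrArg (Int.cast : ℤ → R) hab
  push_cast at hab'
  apply hP
  rw [Ideal.eq_top_iff_one, ← hab']
  exact add_mem (Ideal.mul_mem_left _ _ hr) (Ideal.mul_mem_left _ _ hq)

lemma exists_prime_mem (P : Ideal (𝓞 M)) (hP : P.IsMaximal) : ∃ q : ℕ, q.Prime ∧ (q : 𝓞 M) ∈ P := by
  have hP0 : P ≠ ⊥ := Ring.ne_bot_of_isMaximal_of_not_isField hP (RingOfIntegers.not_isField M)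
  have h0 : Ideal.absNorm P ≠ 0 := by rwa [Ne, Ideal.absNorm_eq_zero_iff]
  have h1 : ((Ideal.absNorm P : ℕ) : 𝓞 M) ∈ P := Ideal.absNorm_mem P
  have key : ∀ n : ℕ, n ≠ 0 → (n : 𝓞 M) ∈ P → ∃ q : ℕ, q.Prime ∧ (q : 𝓞 M) ∈ P := by
    intro n
    induction n using Nat.recOnMul with
    | zero => intro h; exact absurd rfl h
    | one => intro _ h; exact absurd ((Ideal.eq_top_iff_one P).mpr (by simpa using h)) hP.ne_top
    | prime q hq => intro _ h; exact ⟨q, hq, h⟩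
    | mul a b ha hb =>
      intro hab h
      rw [Nat.cast_mul] at h
      rcases hP.isPrime.mem_or_mem h with h | h
      · exact ha (by rintro rfl; simp at hab) h
      · exact hb (by rintro rfl; simp at hab) h
  exact key _ h0 h1

lemma exists_max_over (q : ℕ) (hq : q.Prime) : ∃ P : Ideal (𝓞 M), P.IsMaximal ∧ (q : 𝓞 M) ∈ P := by
  have hne : Ideal.span {(q : 𝓞 M)} ≠ ⊤ := by
    intro h
    rw [Ideal.span_singleton_eq_top] at h
    have := h.map (Algebra.norm ℤ)
    rw [show (q : 𝓞 M) = algebraMap ℤ (𝓞 M) q by simp, Algebra.norm_algebraMap] at this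
    rw [isUnit_pow_iff (Module.finrank_pos).ne', Int.ofNat_isUnit, Nat.isUnit_iff] at this
    exact hq.one_lt.ne' this
  obtain ⟨P, hP, hle⟩ := Ideal.exists_le_maximal _ hne
  exact ⟨P, hP, hle (Ideal.mem_span_singleton_self _)⟩

lemma inertia_eq [IsGalois ℚ M] (hcomm : ∀ σ τ : Gal(M/ℚ), σ * τ = τ * σ) (q : ℕ) (hq : q.Prime)
    (P Q : Ideal (𝓞 M)) (hP : P.IsMaximal) (hQ : Q.IsMaximal) (hqP : (q : 𝓞 M) ∈ P) (hqQ : (q : 𝓞 M) ∈ Q) :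
    P.inertia Gal(M/ℚ) ≤ Q.inertia Gal(M/ℚ) := by
  have hu : ∀ P : Ideal (𝓞 M), P.IsMaximal → (q : 𝓞 M) ∈ P → P.LiesOver (Ideal.span {(q : ℤ)}) := by
    intro P hP hqP
    constructor
    have hmax : (Ideal.span {(q : ℤ)}).IsMaximal :=
      PrincipalIdealRing.isMaximal_of_irreducible (Nat.prime_iff_prime_int.mp hq).irreducible
    refine hmax.eq_of_le ?_ ?_
    · haveI := hP.isPrime
      exact (Ideal.IsPrime.under ℤ P).ne_top
    · rw [Ideal.span_singleton_le_iff_mem, Ideal.mem_comap]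
      simpa using hqP
  haveI := hu P hP hqP
  haveI := hu Q hQ hqQ
  haveI := hP.isPrime
  haveI := hQ.isPrime
  obtain ⟨σ, hσ⟩ := Ideal.exists_smul_eq_of_isGaloisGroup (Ideal.span {(q : ℤ)}) P Q Gal(M/ℚ)
  intro g hg x
  have h1 := hg (σ⁻¹ • x)
  have h2 := Ideal.smul_mem_pointwise_smul σ _ _ h1
  rw [hσ, smul_sub, smul_smul, smul_smul, smul_smul, hcomm σ g, mul_assoc, mul_inv_cancel, mul_one, one_smul] at h2
  exact h2

lemma fix_of_coprime (g : Gal(M/ℚ)) (z : M) (hz : z ≠ 0) (a b : ℕ) (hab : a.Coprime b) (ha : g (z ^ a) = z ^ a)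
    (hb : g (z ^ b) = z ^ b) : g z = z := by
  have h : ∀ a : ℕ, g (z ^ a) = z ^ a → (g z / z) ^ a = 1 := by
    intro a ha
    rw [div_pow, ← map_pow, ha, div_self (pow_ne_zero _ hz)]
  have h1 : orderOf (g z / z) ∣ 1 := by
    rw [← hab]
    exact Nat.dvd_gcd (orderOf_dvd_of_pow_eq_one (h a ha)) (orderOf_dvd_of_pow_eq_one (h b hb))
  have h2 := orderOf_eq_one_iff.mp (Nat.dvd_one.mp h1)
  exact (div_eq_one_iff_eq hz).mp h2

lemma pow_fix (g : Gal(M/ℚ)) (z : M) (r : ℕ) [NeZero r] (hz : IsPrimitiveRoot z r) (k : ℕ)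
    (hk : ∀ u : (ZMod r)ˣ, u ^ k = 1) : (g ^ k) z = z := by
  have h := hz.autToPow_spec ℚ (g ^ k)
  rw [map_pow, hk] at h
  rw [← h]
  by_cases h1 : r = 1
  · subst h1
    have := hz.pow_eq_one
    rw [pow_one] at this
    simp [this]
  · haveI : Fact (1 < r) := ⟨by have := NeZero.ne r; omega⟩
    rw [Units.val_one, ZMod.val_one, pow_one]

lemma lift_fix (g : Gal(M/ℚ)) (z : M) (hz : z ≠ 0) (p : ℕ) (h : g (z ^ p) = z ^ p) 
    (h1 : ∀ c : M, c ^ p = 1 → g c = c) : (g ^ p) z = z := by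
  have hc : (g z / z) ^ p = 1 := by
    rw [div_pow, ← map_pow, h, div_self (pow_ne_zero _ hz)]
  set c := g z / z with hcd
  have hgz : g z = c * z := by rw [hcd, div_mul_cancel₀ _ hz]
  have : ∀ k : ℕ, (g ^ k) z = c ^ k * z := by
    intro k
    induction k with
    | zero => simp
    | succ k ih =>
      rw [pow_succ', AlgEquiv.mul_apply, ih, map_mul, map_pow, h1 c hc, hgz, pow_succ, mul_assoc]
  rw [this, hc, one_mul]

lemma card_sup_le {G ι : Type*} [Group G] [Finite G] (h : ∀ a b : G, a * b = b * a) (I : ι → Subgroup G)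
    (S : Finset ι) : Nat.card (S.sup I : Subgroup G) ≤ ∏ q ∈ S, Nat.card (I q) := by
  classical
  induction S using Finset.induction_on with
  | empty => simp
  | insert a S ha ih =>
    rw [Finset.sup_insert, Finset.prod_insert ha]
    haveI := normal_of_comm h (S.sup I)
    refine le_trans ?_ (Nat.mul_le_mul_left _ ih)
    rw [← SetLike.coe_sort_coe, Subgroup.mul_normal]
    exact Set.natCard_mul_le
end KW
end

section
open NumberField Polynomial
set_option linter.unusedSectionVars false
set_option linter.style.haveILetI false

namespace KW
variable {M : Type*} [Field M] [NumberField M]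

theorem count_struct [IsGalois ℚ M] (hcomm : ∀ σ τ : Gal(M/ℚ), σ * τ = τ * σ)
    (p : ℕ) (hp : p.Prime) (m e : ℕ) (S : Finset ℕ) (hS : ∀ q ∈ S, q.Prime ∧ q ≠ p)
    (ζ : M) (hζ : IsPrimitiveRoot ζ (p ^ e * ∏ q ∈ S, q)) (K : Set M)
    (hK : ∀ g : Gal(M/ℚ), (∀ x ∈ K, g x = x) → g ζ = ζ → g = 1)
    (hexp : ∀ g : Gal(M/ℚ), ∀ x ∈ K, (g ^ (p ^ m)) x = x)
    (hram : ∀ q : ℕ, q.Prime → q ≠ p → q ∉ S → ∀ P : Ideal (𝓞 M), P.IsMaximal → (q : 𝓞 M) ∈ P →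
      ∀ g ∈ P.inertia Gal(M/ℚ), ∀ x ∈ K, g x = x) :
    ∃ (H : Subgroup Gal(M/ℚ)) (P : Ideal (𝓞 M)), P.IsMaximal ∧ (p : 𝓞 M) ∈ P ∧
      Nat.card H ≤ ∏ q ∈ S, (q - 1) ∧ (∀ h ∈ H, h (ζ ^ (∏ q ∈ S, q)) = ζ ^ (∏ q ∈ S, q)) ∧
      H ⊔ P.inertia Gal(M/ℚ) = ⊤ ∧ ∀ g ∈ P.inertia Gal(M/ℚ), g (ζ ^ (p ^ e)) = ζ ^ (p ^ e) := by
  classical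
  have hS0 : ∏ q ∈ S, q ≠ 0 := Finset.prod_ne_zero_iff.mpr fun q hq => (hS q hq).1.ne_zero
  have hpe : p ^ e ≠ 0 := pow_ne_zero _ hp.ne_zero
  have hn0 := mul_ne_zero hpe hS0
  have hζ0 : ζ ≠ 0 := hζ.ne_zero hn0
  have hPex : ∀ q : ℕ, ∃ P : Ideal (𝓞 M), q.Prime → P.IsMaximal ∧ (q : 𝓞 M) ∈ P := by
    intro q
    by_cases hq : q.Prime
    · obtain ⟨P, hP⟩ := exists_max_over (M := M) q hq
      exact ⟨P, fun _ => hP⟩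
    · exact ⟨⊥, fun h => absurd h hq⟩
  choose Pr hPr using hPex
  let I : ℕ → Subgroup Gal(M/ℚ) := fun q => (Pr q).inertia Gal(M/ℚ)
  have hcop : ∀ q ∈ S, (∏ q ∈ S.erase q, q).Coprime q := by
    intro q hq
    refine Nat.Coprime.prod_left fun r hr => ?_
    rw [Finset.mem_erase] at hr
    exact (Nat.coprime_primes (hS r hr.2).1 (hS q hq).1).mpr hr.1
  have hcopp : ∀ q ∈ S, ∀ k, (p ^ k).Coprime q := fun q hq k =>
    Nat.Coprime.pow_left _ ((Nat.coprime_primes hp (hS q hq).1).mpr (hS q hq).2.symm)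
  refine ⟨S.sup I, Pr p, (hPr p hp).1, (hPr p hp).2, ?_, ?_, ?_, ?_⟩
  · refine (card_sup_le hcomm I S).trans (Finset.prod_le_prod' fun q hq => ?_)
    have hqp := (hS q hq).1
    refine tame hcomm (Pr q) (hPr q hqp).1 q hqp (hPr q hqp).2 ?_
    intro g hg
    refine ⟨p ^ m * (q - 1), Nat.Coprime.mul_left (hcopp q hq m) ?_, ?_⟩
    · exact (Nat.coprime_self_sub_right hqp.one_lt.le |>.mpr (by simp)).symm
    apply hK
    · intro x hx
      rw [mul_comm, pow_mul]
      exact hexp _ x hx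
    · have hprod : p ^ e * ∏ q ∈ S, q = (p ^ e * ∏ q ∈ S.erase q, q) * q := by
        rw [mul_assoc, Finset.prod_erase_mul _ _ hq]
      apply fix_of_coprime _ ζ hζ0 (p ^ e * ∏ q ∈ S.erase q, q) q
      · exact Nat.Coprime.mul_left (hcopp q hq e) (hcop q hq)
      · rw [mul_comm, pow_mul]
        haveI : NeZero q := ⟨hqp.ne_zero⟩
        haveI : Fact q.Prime := ⟨hqp⟩
        have hw : IsPrimitiveRoot (ζ ^ (p ^ e * ∏ q ∈ S.erase q, q)) q :=
          hζ.pow (Nat.pos_of_ne_zero hn0) hprod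
        have : (g ^ (q - 1)) (ζ ^ (p ^ e * ∏ q ∈ S.erase q, q)) = (ζ ^ (p ^ e * ∏ q ∈ S.erase q, q)) :=
          pow_fix g _ q hw (q - 1) (fun u => ZMod.units_pow_card_sub_one_eq_one q u)
        have h2 : g ^ (q - 1) ∈ MulAction.stabilizer Gal(M/ℚ) (ζ ^ (p ^ e * ∏ q ∈ S.erase q, q)) := this
        exact Subgroup.pow_mem _ h2 _
      · have h1 : g (ζ ^ q) = ζ ^ q := by
          apply smul_root_of_unity (Pr q) (hPr q hqp).1.isPrime g hg _ (p ^ e * ∏ q ∈ S.erase q, q)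
          · intro h; rw [h, zero_mul] at hprod; exact hn0 hprod
          · rw [← pow_mul, mul_comm, ← hprod, hζ.pow_eq_one]
          · exact natCast_not_mem _ (hPr q hqp).1.ne_top q _ (hPr q hqp).2
              (Nat.Coprime.mul_left (hcopp q hq e) (hcop q hq))
        have h2 : g ∈ MulAction.stabilizer Gal(M/ℚ) (ζ ^ q) := h1
        exact Subgroup.pow_mem _ h2 _
  · have hle : S.sup I ≤ MulAction.stabilizer Gal(M/ℚ) (ζ ^ (∏ q ∈ S, q)) := by
      refine Finset.sup_le fun q hq => ?_
      intro g hg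
      have hqp := (hS q hq).1
      refine smul_root_of_unity (Pr q) (hPr q hqp).1.isPrime g hg _ (p ^ e) hpe ?_ ?_
      · rw [← pow_mul, mul_comm, hζ.pow_eq_one]
      · exact natCast_not_mem _ (hPr q hqp).1.ne_top q _ (hPr q hqp).2 (hcopp q hq e)
    exact fun h hh => hle hh
  · apply iSup_inertia
    intro P hP
    obtain ⟨q, hq, hqP⟩ := exists_prime_mem P hP
    by_cases hqp : q = p
    · subst hqp
      exact (inertia_eq hcomm q hq P (Pr q) hP (hPr q hq).1 hqP (hPr q hq).2).trans le_sup_right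
    by_cases hqS : q ∈ S
    · exact (inertia_eq hcomm q hq P (Pr q) hP (hPr q hq).1 hqP (hPr q hq).2).trans
        ((Finset.le_sup (f := I) hqS).trans le_sup_left)
    · intro g hg
      rw [hK g (hram q hq hqp hqS P hP hqP g hg) ?_]
      · exact one_mem _
      · refine smul_root_of_unity P hP.isPrime g hg _ _ hn0 hζ.pow_eq_one ?_
        refine natCast_not_mem _ hP.ne_top q _ hqP (Nat.Coprime.mul_left ?_ ?_)
        · exact Nat.Coprime.pow_left _ ((Nat.coprime_primes hp hq).mpr (Ne.symm hqp))
        · exact Nat.Coprime.prod_left fun r hr => (Nat.coprime_primes (hS r hr).1 hq).mpr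
            (by rintro rfl; exact hqS hr)
  · intro g hg
    refine smul_root_of_unity (Pr p) (hPr p hp).1.isPrime g hg _ _ hS0 ?_ ?_
    · rw [← pow_mul, hζ.pow_eq_one]
    · exact natCast_not_mem _ (hPr p hp).1.ne_top p _ (hPr p hp).2 
        (Nat.Coprime.prod_left fun q hq => (by simpa using (hcopp q hq 1).symm))
end KW
end

section
open NumberField Polynomial
set_option linter.unusedSectionVars false
set_option linter.style.haveILetI false

namespace KW
variable {M : Type*} [Field M] [NumberField M]

lemma descend_lift [IsGalois ℚ M]  
    (H : Subgroup Gal(M/ℚ)) [H.Normal] (I : Subgroup Gal(M/ℚ)) [I.Normal] (hHI : H ⊔ I = ⊤)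
    (g : Gal(IntermediateField.fixedField H/ℚ)) :
    ∃ i ∈ I, ∀ x : IntermediateField.fixedField H, ((g x : IntermediateField.fixedField H) : M) = i x := by
  let N := IntermediateField.fixedField H
  haveI : IsGalois ℚ N := IsGalois.of_fixedField_normal_subgroup H
  obtain ⟨s, hs⟩ := AlgEquiv.restrictNormalHom_surjective (F := ℚ) (K₁ := N) M g
  have hs' : ∀ x : N, ((g x : N) : M) = s x := by
    intro x
    rw [← hs]
    exact AlgEquiv.restrictNormal_commutes s N x
  have hmem : s ∈ I ⊔ H := by rw [sup_comm, hHI]; trivial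
  rw [← SetLike.mem_coe, Subgroup.mul_normal] at hmem
  obtain ⟨i, hi, h, hh, rfl⟩ := hmem
  refine ⟨i, hi, fun x => ?_⟩
  rw [hs', AlgEquiv.mul_apply]
  congr 1
  exact x.2 ⟨h, hh⟩

lemma descend_comm [IsGalois ℚ M] (hcomm : ∀ σ τ : Gal(M/ℚ), σ * τ = τ * σ)
    (N : IntermediateField ℚ M) [IsGalois ℚ N] : ∀ σ τ : Gal(N/ℚ), σ * τ = τ * σ := by
  intro σ τ
  obtain ⟨s, rfl⟩ := AlgEquiv.restrictNormalHom_surjective (F := ℚ) (K₁ := N) M σ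
  obtain ⟨t, rfl⟩ := AlgEquiv.restrictNormalHom_surjective (F := ℚ) (K₁ := N) M τ
  rw [← map_mul, ← map_mul, hcomm]

lemma descend_inertia [IsGalois ℚ M] (hcomm : ∀ σ τ : Gal(M/ℚ), σ * τ = τ * σ)
    (H : Subgroup Gal(M/ℚ)) [H.Normal] (P : Ideal (𝓞 M)) (hP : P.IsMaximal)
    (hHI : H ⊔ P.inertia Gal(M/ℚ) = ⊤) (p : ℕ) (hpP : (p : 𝓞 M) ∈ P) :
    ∃ Q : Ideal (𝓞 (IntermediateField.fixedField H)), Q.IsMaximal ∧ 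
      (p : 𝓞 (IntermediateField.fixedField H)) ∈ Q ∧ 
      Q.inertia Gal(IntermediateField.fixedField H/ℚ) = ⊤ := by
  let N := IntermediateField.fixedField H
  haveI := normal_of_comm hcomm (P.inertia Gal(M/ℚ))
  refine ⟨P.comap (algebraMap (𝓞 N) (𝓞 M)), ?_, ?_, ?_⟩
  · haveI := hP
    exact Ideal.isMaximal_comap_of_isIntegral_of_isMaximal P
  · rw [Ideal.mem_comap, map_natCast]; exact hpP
  · rw [eq_top_iff]
    intro g _ x
    obtain ⟨i, hi, hix⟩ := descend_lift H (P.inertia Gal(M/ℚ)) hHI g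
    change algebraMap (𝓞 N) (𝓞 M) (g • x - x) ∈ P
    have h1 := hi (algebraMap (𝓞 N) (𝓞 M) x)
    have h2 : algebraMap (𝓞 N) (𝓞 M) (g • x) = i • algebraMap (𝓞 N) (𝓞 M) x := by
      apply RingOfIntegers.coe_injective
      exact hix x
    rw [map_sub, h2]
    exact h1

lemma finrank_fixed [IsGalois ℚ M] (H : Subgroup Gal(M/ℚ)) (a b : ℕ) (ha : Nat.card H ≤ a)
    (hb : Module.finrank ℚ (IntermediateField.fixedField H) ≤ b) : Module.finrank ℚ M ≤ b * a := by
  rw [← Module.finrank_mul_finrank ℚ (IntermediateField.fixedField H) M, 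
    IntermediateField.finrank_fixedField_eq_card]
  exact Nat.mul_le_mul hb ha

lemma tot_prod (S : Finset ℕ) (hS : ∀ q ∈ S, q.Prime) : (∏ q ∈ S, q).totient = ∏ q ∈ S, (q - 1) := by
  classical
  induction S using Finset.induction_on with
  | empty => simp
  | insert a S ha ih =>
    rw [Finset.prod_insert ha, Finset.prod_insert ha, Nat.totient_mul, ih fun q hq => hS q (Finset.mem_insert_of_mem hq),
      Nat.totient_prime (hS a (Finset.mem_insert_self _ _))]
    refine Nat.Coprime.prod_right fun q hq => ?_
    refine (Nat.coprime_primes (hS a (Finset.mem_insert_self _ _)) (hS q (Finset.mem_insert_of_mem hq))).mpr ?_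
    rintro rfl; exact ha hq

lemma tot_n (p : ℕ) (hp : p.Prime) (e : ℕ) (S : Finset ℕ) (hS : ∀ q ∈ S, q.Prime ∧ q ≠ p) :
    (p ^ e * ∏ q ∈ S, q).totient = (p ^ e).totient * ∏ q ∈ S, (q - 1) := by
  rw [Nat.totient_mul, tot_prod S fun q hq => (hS q hq).1]
  exact Nat.Coprime.prod_right fun q hq => Nat.Coprime.pow_left _ 
    ((Nat.coprime_primes hp (hS q hq).1).mpr (hS q hq).2.symm)

/-- if g fixes p-th roots of unity, then g^(p^k) fixes p^(k+1)-th roots -/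
lemma pow_fix_odd (g : Gal(M/ℚ)) (p : ℕ) (hp : p.Prime) (h1 : ∀ c : M, c ^ p = 1 → g c = c) (k : ℕ) :
    ∀ z : M, z ^ (p ^ (k + 1)) = 1 → (g ^ (p ^ k)) z = z := by
  have hpw : ∀ j : ℕ, ∀ c : M, c ^ p = 1 → (g ^ j) c = c := fun j c hc => by
    have : g ∈ MulAction.stabilizer Gal(M/ℚ) c := h1 c hc
    exact Subgroup.pow_mem _ this j
  induction k with
  | zero => intro z hz; simpa using h1 z (by simpa using hz)
  | succ k ih =>
    intro z hz
    rw [pow_succ p k, pow_mul]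
    refine lift_fix _ z ?_ p (ih _ ?_) (hpw _)
    · rintro rfl; rw [zero_pow (pow_ne_zero _ hp.ne_zero)] at hz; exact zero_ne_one hz
    · rw [← pow_mul, ← pow_succ', hz]

lemma pow_fix_two (g : Gal(M/ℚ)) (k : ℕ) :
    ∀ z : M, IsPrimitiveRoot z (2 ^ (k + 3)) → (g ^ (2 ^ (k + 1))) z = z := by
  induction k with
  | zero =>
    intro z hz
    haveI : NeZero (2 ^ (0 + 3)) := ⟨by norm_num⟩
    exact pow_fix g z _ hz _ (by decide)
  | succ k ih =>
    intro z hz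
    rw [pow_succ 2 (k + 1), pow_mul]
    refine lift_fix _ z (hz.ne_zero (by positivity)) 2 (ih _ ?_) ?_
    · exact hz.pow (by positivity) (by ring)
    · intro c hc
      rcases sq_eq_sq_iff_eq_or_eq_neg.mp (hc.trans (one_pow 2).symm) with h | h
      · rw [h, map_one]
      · rw [h, map_neg, map_one]
end KW
end

section
open NumberField Polynomial
set_option linter.unusedSectionVars false
set_option linter.style.haveILetI false

namespace KW
variable {M : Type*} [Field M] [NumberField M]

theorem count_odd [IsGalois ℚ M] (hcomm : ∀ σ τ : Gal(M/ℚ), σ * τ = τ * σ)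
    (p : ℕ) [hp : Fact p.Prime] (hp2 : p ≠ 2) (m : ℕ) (S : Finset ℕ) (hS : ∀ q ∈ S, q.Prime ∧ q ≠ p)
    (ζ : M) (hζ : IsPrimitiveRoot ζ (p ^ (m + 2) * ∏ q ∈ S, q)) (K : Set M)
    (hK : ∀ g : Gal(M/ℚ), (∀ x ∈ K, g x = x) → g ζ = ζ → g = 1)
    (hexp : ∀ g : Gal(M/ℚ), ∀ x ∈ K, (g ^ (p ^ (m + 1))) x = x)
    (hram : ∀ q : ℕ, q.Prime → q ≠ p → q ∉ S → ∀ P : Ideal (𝓞 M), P.IsMaximal → (q : 𝓞 M) ∈ P →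
      ∀ g ∈ P.inertia Gal(M/ℚ), ∀ x ∈ K, g x = x) :
    Module.finrank ℚ M ≤ (p ^ (m + 2) * ∏ q ∈ S, q).totient := by
  obtain ⟨H, P, hP, hpP, hcard, hHfix, hsup, hIfix⟩ :=
    count_struct hcomm p hp.out (m + 1) (m + 2) S hS ζ hζ K hK hexp hram
  have hS0 : ∏ q ∈ S, q ≠ 0 := Finset.prod_ne_zero_iff.mpr fun q hq => (hS q hq).1.ne_zero
  have hpe : p ^ (m + 2) ≠ 0 := pow_ne_zero _ hp.out.ne_zero
  have hn0 := mul_ne_zero hpe hS0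
  have hζ0 : ζ ≠ 0 := hζ.ne_zero hn0
  haveI := normal_of_comm hcomm H
  haveI := normal_of_comm hcomm (P.inertia Gal(M/ℚ))
  haveI : IsGalois ℚ (IntermediateField.fixedField H) := IsGalois.of_fixedField_normal_subgroup H
  rw [tot_n p hp.out _ S hS, Nat.totient_prime_pow hp.out (by omega)]
  apply finrank_fixed H _ _ hcard
  obtain ⟨Q, hQ, hpQ, hQI⟩ := descend_inertia hcomm H P hP hsup p hpP
  have hw : IsPrimitiveRoot (ζ ^ (∏ q ∈ S, q)) (p ^ (m + 2)) := hζ.pow (Nat.pos_of_ne_zero hn0) (mul_comm _ _)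
  let w : IntermediateField.fixedField H := ⟨ζ ^ (∏ q ∈ S, q), fun h => hHfix h.1 h.2⟩
  have hw' : IsPrimitiveRoot w (p ^ (m + 2)) :=
    hw.of_map_of_injective (f := algebraMap (IntermediateField.fixedField H) M) (algebraMap (IntermediateField.fixedField H) M).injective
  have hz2 : IsPrimitiveRoot (w ^ (p ^ m)) (p ^ 2) := hw'.pow (Nat.pos_of_ne_zero hpe) (by ring)
  have hz1 : IsPrimitiveRoot ((w ^ (p ^ m)) ^ p) p := hz2.pow (pow_pos hp.out.pos 2) (by ring)
  let F := IntermediateField.adjoin ℚ {(w ^ (p ^ m)) ^ p}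
  haveI : NeZero p := ⟨hp.out.ne_zero⟩
  haveI : IsCyclotomicExtension {p} ℚ F := hz1.intermediateField_adjoin_isCyclotomicExtension ℚ
  let z : F := ⟨(w ^ (p ^ m)) ^ p, IntermediateField.mem_adjoin_simple_self ℚ _⟩
  rw [show m + 2 - 1 = m + 1 from rfl]
  refine bound_odd (F := F) p (descend_comm hcomm _) hp2 Q hQ hpQ hQI z (w ^ (p ^ m)) hz2 rfl (m + 1) ?_
  intro g
  obtain ⟨i, hi, hix⟩ := descend_lift H (P.inertia Gal(M/ℚ)) hsup (g.restrictScalars ℚ)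
  have hpow : ∀ (k : ℕ) (x : IntermediateField.fixedField H), (((g ^ k) x : IntermediateField.fixedField H) : M) = (i ^ k) x := by
    intro k
    induction k with
    | zero => intro x; simp
    | succ k ih =>
      intro x
      rw [pow_succ, pow_succ, AlgEquiv.mul_apply, AlgEquiv.mul_apply, ih, ← hix]
      rfl
  have hi1 : i ^ (p ^ (m + 1)) = 1 := by
    apply hK
    · exact hexp i
    · apply fix_of_coprime _ ζ hζ0 (∏ q ∈ S, q) (p ^ (m + 2))
      · exact Nat.Coprime.prod_left fun q hq => Nat.Coprime.pow_right _
          ((Nat.coprime_primes (hS q hq).1 hp.out).mpr (hS q hq).2)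
      · apply pow_fix_odd i p hp.out
        · intro c hc
          have hz1M : IsPrimitiveRoot (((w ^ (p ^ m)) ^ p : IntermediateField.fixedField H) : M) p :=
            hz1.map_of_injective (f := algebraMap (IntermediateField.fixedField H) M) (algebraMap (IntermediateField.fixedField H) M).injective
          obtain ⟨k, -, rfl⟩ := hz1M.eq_pow_of_pow_eq_one hc
          rw [map_pow, ← hix]
          congr 2
          exact g.commutes z
        · exact hw.pow_eq_one
      · have : i ∈ MulAction.stabilizer Gal(M/ℚ) (ζ ^ (p ^ (m + 2))) := hIfix i hi
        exact Subgroup.pow_mem _ this _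
  ext x
  rw [hpow, hi1]
  rfl

theorem count_two [IsGalois ℚ M] (hcomm : ∀ σ τ : Gal(M/ℚ), σ * τ = τ * σ)
    (m : ℕ) (S : Finset ℕ) (hS : ∀ q ∈ S, q.Prime ∧ q ≠ 2)
    (ζ : M) (hζ : IsPrimitiveRoot ζ (2 ^ (m + 3) * ∏ q ∈ S, q)) (K : Set M)
    (hK : ∀ g : Gal(M/ℚ), (∀ x ∈ K, g x = x) → g ζ = ζ → g = 1)
    (hexp : ∀ g : Gal(M/ℚ), ∀ x ∈ K, (g ^ (2 ^ (m + 1))) x = x)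
    (hram : ∀ q : ℕ, q.Prime → q ≠ 2 → q ∉ S → ∀ P : Ideal (𝓞 M), P.IsMaximal → (q : 𝓞 M) ∈ P →
      ∀ g ∈ P.inertia Gal(M/ℚ), ∀ x ∈ K, g x = x) :
    Module.finrank ℚ M ≤ (2 ^ (m + 3) * ∏ q ∈ S, q).totient := by
  have hp := Nat.prime_two
  obtain ⟨H, P, hP, hpP, hcard, hHfix, hsup, hIfix⟩ :=
    count_struct hcomm 2 hp (m + 1) (m + 3) S hS ζ hζ K hK hexp hram
  have hS0 : ∏ q ∈ S, q ≠ 0 := Finset.prod_ne_zero_iff.mpr fun q hq => (hS q hq).1.ne_zero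
  have hpe : 2 ^ (m + 3) ≠ 0 := pow_ne_zero _ hp.ne_zero
  have hn0 := mul_ne_zero hpe hS0
  have hζ0 : ζ ≠ 0 := hζ.ne_zero hn0
  haveI := normal_of_comm hcomm H
  haveI := normal_of_comm hcomm (P.inertia Gal(M/ℚ))
  haveI : IsGalois ℚ (IntermediateField.fixedField H) := IsGalois.of_fixedField_normal_subgroup H
  rw [tot_n 2 hp _ S hS, Nat.totient_prime_pow hp (by omega)]
  apply finrank_fixed H _ _ hcard
  obtain ⟨Q, hQ, hpQ, hQI⟩ := descend_inertia hcomm H P hP hsup 2 hpP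
  have hw : IsPrimitiveRoot (ζ ^ (∏ q ∈ S, q)) (2 ^ (m + 3)) := hζ.pow (Nat.pos_of_ne_zero hn0) (mul_comm _ _)
  let w : IntermediateField.fixedField H := ⟨ζ ^ (∏ q ∈ S, q), fun h => hHfix h.1 h.2⟩
  have hw' : IsPrimitiveRoot w (2 ^ (m + 3)) :=
    hw.of_map_of_injective (f := algebraMap (IntermediateField.fixedField H) M) (algebraMap (IntermediateField.fixedField H) M).injective
  have hz8 : IsPrimitiveRoot (w ^ (2 ^ m)) 8 := hw'.pow (Nat.pos_of_ne_zero hpe) (by ring)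
  have hz4 : (w ^ (2 ^ m)) ^ 4 = -1 := by
    have := hz8.pow (by norm_num) (show 8 = 4 * 2 by norm_num)
    exact this.eq_neg_one_of_two_right
  set u := w ^ (2 ^ m) with hu
  have hu0 : u ≠ 0 := hz8.ne_zero (by norm_num)
  rw [show m + 3 - 1 = m + 1 + 1 from rfl, show 2 - 1 = 1 from rfl, mul_one]
  refine bound_two (descend_comm hcomm _) Q hQ (by simpa using hpQ) hQI (u ^ 2) (u - u ^ 3) 
    (by rw [← hz4]; ring) (by linear_combination (u ^ 2 - 2) * hz4) (m + 1) ?_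
  intro g
  obtain ⟨i, hi, hix⟩ := descend_lift H (P.inertia Gal(M/ℚ)) hsup g
  have hpow : ∀ (k : ℕ) (x : IntermediateField.fixedField H), (((g ^ k) x : IntermediateField.fixedField H) : M) = (i ^ k) x := by
    intro k
    induction k with
    | zero => intro x; simp
    | succ k ih =>
      intro x
      rw [pow_succ, pow_succ, AlgEquiv.mul_apply, AlgEquiv.mul_apply, ih, ← hix]
  have hi1 : i ^ (2 ^ (m + 1)) = 1 := by
    apply hK
    · exact hexp i
    · apply fix_of_coprime _ ζ hζ0 (∏ q ∈ S, q) (2 ^ (m + 3))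
      · exact Nat.Coprime.prod_left fun q hq => Nat.Coprime.pow_right _
          ((Nat.coprime_primes (hS q hq).1 hp).mpr (hS q hq).2)
      · exact pow_fix_two i m _ hw
      · have : i ∈ MulAction.stabilizer Gal(M/ℚ) (ζ ^ (2 ^ (m + 3))) := hIfix i hi
        exact Subgroup.pow_mem _ this _
  ext x
  rw [hpow, hi1]
  rfl
end KW
end

section
open NumberField Polynomial
set_option linter.unusedSectionVars false
set_option linter.style.haveILetI false

namespace KW

lemma eq_one_of_gen {M : Type*} [Field M] [NumberField M] (s : Set M) (hs : IntermediateField.adjoin ℚ s = ⊤)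
    (g : Gal(M/ℚ)) (hg : ∀ x ∈ s, g x = x) : g = 1 := by
  have h1 : IntermediateField.adjoin ℚ s ≤ IntermediateField.fixedField (Subgroup.zpowers g) := by
    rw [IntermediateField.adjoin_le_iff]
    intro x hx
    rintro ⟨h, n, rfl⟩
    have : g ∈ MulAction.stabilizer Gal(M/ℚ) x := hg x hx
    exact Subgroup.zpow_mem _ this n
  ext x
  have hx : x ∈ IntermediateField.adjoin ℚ s := by rw [hs]; trivial
  exact h1 hx ⟨g, Subgroup.mem_zpowers g⟩

theorem pgroup_bound (K : Type) [Field K] [NumberField K] [IsGalois ℚ K]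
    (hcommK : ∀ σ τ : Gal(K/ℚ), σ * τ = τ * σ) (p : ℕ) [hp : Fact p.Prime] (hpg : IsPGroup p Gal(K/ℚ)) :
    ∃ n : ℕ, 0 < n ∧ ∀ (M : Type) [Field M] [NumberField M] [Algebra K M] [IsGalois ℚ M] (ζ : M),
      IsPrimitiveRoot ζ n → IntermediateField.adjoin ℚ (Set.range (algebraMap K M) ∪ {ζ}) = ⊤ →
      Module.finrank ℚ M ≤ n.totient := by
  classical
  obtain ⟨m, hm⟩ := IsPGroup.iff_card.mp hpg
  obtain ⟨D, hD0, hD⟩ := finite_ram K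
  let S := D.primeFactors.erase p
  have hS : ∀ q ∈ S, q.Prime ∧ q ≠ p := fun q hq => 
    ⟨Nat.prime_of_mem_primeFactors (Finset.mem_of_mem_erase hq), Finset.ne_of_mem_erase hq⟩
  have hS0 : 0 < ∏ q ∈ S, q := Finset.prod_pos fun q hq => (hS q hq).1.pos
  have hexpK : ∀ g : Gal(K/ℚ), g ^ (p ^ (m + 1)) = 1 := by
    intro g
    rw [pow_succ, pow_mul, ← hm, pow_card_eq_one', one_pow]
  have key : ∀ (M : Type) [Field M] [NumberField M] [Algebra K M] [IsGalois ℚ M] (ζ : M) (n : ℕ), 0 < n →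
      IsPrimitiveRoot ζ n → IntermediateField.adjoin ℚ (Set.range (algebraMap K M) ∪ {ζ}) = ⊤ →
      (∀ σ τ : Gal(M/ℚ), σ * τ = τ * σ) ∧ 
      (∀ g : Gal(M/ℚ), (∀ x ∈ Set.range (algebraMap K M), g x = x) → g ζ = ζ → g = 1) ∧
      (∀ g : Gal(M/ℚ), ∀ x ∈ Set.range (algebraMap K M), (g ^ (p ^ (m + 1))) x = x) ∧
      (∀ q : ℕ, q.Prime → q ≠ p → q ∉ S → ∀ P : Ideal (𝓞 M), P.IsMaximal → (q : 𝓞 M) ∈ P →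
      ∀ g ∈ P.inertia Gal(M/ℚ), ∀ x ∈ Set.range (algebraMap K M), g x = x) := by
    intro M _ _ _ _ ζ n hn0 hζ hgen
    have hres : ∀ (g : Gal(M/ℚ)) (x : K), algebraMap K M (AlgEquiv.restrictNormalHom K g x) = g (algebraMap K M x) :=
      fun g x => AlgEquiv.restrictNormal_commutes g K x
    have h1 : ∀ g : Gal(M/ℚ), (∀ x ∈ Set.range (algebraMap K M), g x = x) → g ζ = ζ → g = 1 := by
      intro g hg hgz
      apply eq_one_of_gen _ hgen
      rintro x (hx | hx)
      · exact hg x hx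
      · rw [Set.mem_singleton_iff.mp hx, hgz]
    haveI : NeZero n := ⟨hn0.ne'⟩
    refine ⟨?_, h1, ?_, ?_⟩
    · intro σ τ
      have : (τ * σ)⁻¹ * (σ * τ) = 1 := by
        apply h1
        · rintro _ ⟨x, rfl⟩
          rw [← hres, map_mul, map_inv, map_mul, map_mul, hcommK (AlgEquiv.restrictNormalHom K σ) (AlgEquiv.restrictNormalHom K τ), inv_mul_cancel]; rfl
        · have h2 := hζ.autToPow_spec ℚ ((τ * σ)⁻¹ * (σ * τ))
          rw [map_mul, map_inv, map_mul, map_mul, mul_comm (hζ.autToPow ℚ σ), inv_mul_cancel] at h2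
          have h3 := hζ.autToPow_spec ℚ (1 : Gal(M/ℚ))
          rw [map_one] at h3
          rw [← h2, h3]; rfl
      exact (inv_mul_eq_one.mp this).symm
    · rintro g _ ⟨x, rfl⟩
      rw [← hres, map_pow, hexpK]; rfl
    · rintro q hq hqp hqS P hP hqP g hg _ ⟨x, rfl⟩
      have hqD : ¬ q ∣ D := fun h => hqS (Finset.mem_erase.mpr ⟨hqp, Nat.mem_primeFactors.mpr ⟨hq, h, hD0⟩⟩)
      have hmax : (P.comap (algebraMap (𝓞 K) (𝓞 M))).IsMaximal := by
        haveI := hP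
        haveI : Algebra.IsIntegral (𝓞 K) (𝓞 M) := inferInstance
        exact Ideal.isMaximal_comap_of_isIntegral_of_isMaximal P
      have hbot := hD q hq _ hmax (by rw [Ideal.mem_comap, map_natCast]; exact hqP) hqD
      have hmem : AlgEquiv.restrictNormalHom K g ∈ (P.comap (algebraMap (𝓞 K) (𝓞 M))).inertia Gal(K/ℚ) := by
        intro y
        change algebraMap (𝓞 K) (𝓞 M) (AlgEquiv.restrictNormalHom K g • y - y) ∈ P
        have h2 : algebraMap (𝓞 K) (𝓞 M) (AlgEquiv.restrictNormalHom K g • y) = g • algebraMap (𝓞 K) (𝓞 M) y := by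
          apply RingOfIntegers.coe_injective
          exact hres g y
        rw [map_sub, h2]
        exact hg _
      rw [hbot, Subgroup.mem_bot] at hmem
      rw [← hres, hmem]; rfl
  by_cases hp2 : p = 2
  · subst hp2
    refine ⟨2 ^ (m + 3) * ∏ q ∈ S, q, by positivity, ?_⟩
    intro M _ _ _ _ ζ hζ hgen
    obtain ⟨k1, k2, k3, k4⟩ := key M ζ _ (by positivity) hζ hgen
    exact count_two k1 m S hS ζ hζ _ k2 k3 k4
  · have := hp.out.pos
    refine ⟨p ^ (m + 2) * ∏ q ∈ S, q, by positivity, ?_⟩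
    intro M _ _ _ _ ζ hζ hgen
    obtain ⟨k1, k2, k3, k4⟩ := key M ζ _ (by positivity) hζ hgen
    exact count_odd k1 p hp2 m S hS ζ hζ _ k2 k3 k4

end KW
end

section
open NumberField Polynomial
set_option linter.unusedSectionVars false
set_option linter.style.haveILetI false

namespace KW

theorem pgroup_kw {Ω : Type} [Field Ω] [CharZero Ω] (K : Type) [Field K] [NumberField K] [IsGalois ℚ K] 
    (f : K →ₐ[ℚ] Ω)
    (hcommK : ∀ σ τ : Gal(K/ℚ), σ * τ = τ * σ) (p : ℕ) [hp : Fact p.Prime] (hpg : IsPGroup p Gal(K/ℚ)) :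
    ∃ n : ℕ, 0 < n ∧ ∀ ζ : Ω, IsPrimitiveRoot ζ n → ∀ x : K, f x ∈ IntermediateField.adjoin ℚ {ζ} := by
  obtain ⟨n, hn, h⟩ := pgroup_bound K hcommK p hpg
  refine ⟨n, hn, ?_⟩
  intro ζ hζ
  haveI : NeZero n := ⟨hn.ne'⟩
  let L := IntermediateField.adjoin ℚ {ζ}
  haveI hcyc : IsCyclotomicExtension {n} ℚ L :=
    (IntermediateField.isCyclotomicExtension_singleton_iff_eq_adjoin n ℚ Ω L hζ).mpr rfl
  haveI : IsGalois ℚ L := IsCyclotomicExtension.isGalois {n} ℚ L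
  haveI : FiniteDimensional ℚ L := IsCyclotomicExtension.finiteDimensional {n} ℚ L
  haveI : FiniteDimensional ℚ f.fieldRange := f.equivFieldRange.toLinearEquiv.finiteDimensional
  let M := f.fieldRange ⊔ L
  haveI : FiniteDimensional ℚ M := IntermediateField.finiteDimensional_sup f.fieldRange L
  haveI : NumberField M := ⟨⟩
  haveI : Normal ℚ M := by
    have hKn : Normal ℚ f.fieldRange := Normal.of_algEquiv f.equivFieldRange
    have hLn : Normal ℚ L := IsGalois.to_normal
    exact @IntermediateField.normal_sup ℚ Ω _ _ _ f.fieldRange L hKn hLn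
  haveI : IsGalois ℚ M := ⟨⟩
  letI : Algebra K M := ((IntermediateField.inclusion (le_sup_left : f.fieldRange ≤ M)).comp f.equivFieldRange.toAlgHom).toRingHom.toAlgebra
  have hζL : ζ ∈ L := IntermediateField.mem_adjoin_simple_self ℚ ζ
  let z : M := ⟨ζ, (le_sup_right : L ≤ M) hζL⟩
  have hz : IsPrimitiveRoot z n := hζ.of_map_of_injective (f := algebraMap M Ω) (algebraMap M Ω).injective
  have hfr := h M z hz (by
    rw [eq_top_iff]
    rintro ⟨x, hx⟩ -
    set E := IntermediateField.adjoin ℚ (Set.range (algebraMap K M) ∪ {z}) with hE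
    have hle : M ≤ IntermediateField.lift E := by
      refine sup_le ?_ ?_
      · rintro _ ⟨y, rfl⟩
        refine ⟨algebraMap K M y, ?_, rfl⟩
        exact IntermediateField.subset_adjoin ℚ _ (Or.inl ⟨_, rfl⟩)
      · rw [IntermediateField.adjoin_simple_le_iff]
        refine ⟨z, ?_, rfl⟩
        exact IntermediateField.subset_adjoin ℚ _ (Or.inr rfl)
    obtain ⟨y, hy, hyx⟩ := hle hx
    have : y = ⟨x, hx⟩ := Subtype.ext hyx
    rw [← this]
    exact hy)
  have hLM : L = M := by
    refine IntermediateField.eq_of_le_of_finrank_le le_sup_right ?_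
    rw [IsCyclotomicExtension.Rat.finrank n L]
    exact hfr
  intro x
  change f x ∈ L
  rw [hLM]
  exact (le_sup_left : f.fieldRange ≤ M) ⟨x, rfl⟩

theorem kw {Ω : Type} [Field Ω] [CharZero Ω] (d : ℕ) : ∀ (K : Type) [Field K] [NumberField K] [IsGalois ℚ K] 
    (f : K →ₐ[ℚ] Ω) (_hcommK : ∀ σ τ : Gal(K/ℚ), σ * τ = τ * σ) (_hd : Module.finrank ℚ K = d), 
    ∃ n : ℕ, 0 < n ∧ ∀ ζ : Ω, IsPrimitiveRoot ζ n → ∀ x : K, f x ∈ IntermediateField.adjoin ℚ {ζ} := by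
  induction d using Nat.strong_induction_on with
  | _ d ih =>
  intro K _ _ _ f hcomm hd
  by_cases hex : ∃ p : ℕ, p.Prime ∧ IsPGroup p Gal(K/ℚ)
  · obtain ⟨p, hp, hpg⟩ := hex
    haveI : Fact p.Prime := ⟨hp⟩
    exact pgroup_kw K f hcomm p hpg
  have hc0 : Nat.card Gal(K/ℚ) ≠ 0 := Nat.card_pos.ne'
  obtain ⟨p, hp, hpd⟩ : ∃ p : ℕ, p.Prime ∧ p ∣ Nat.card Gal(K/ℚ) := by
    apply Nat.exists_prime_and_dvd
    intro h1
    apply hex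
    refine ⟨2, Nat.prime_two, ?_⟩
    haveI : Fact (Nat.Prime 2) := ⟨Nat.prime_two⟩
    exact IsPGroup.of_card (n := 0) (by rw [h1, pow_zero])
  obtain ⟨q, hq, hqd, hqp⟩ : ∃ q : ℕ, q.Prime ∧ q ∣ Nat.card Gal(K/ℚ) ∧ q ≠ p := by
    by_contra! hcon
    apply hex
    refine ⟨p, hp, ?_⟩
    haveI : Fact p.Prime := ⟨hp⟩
    exact IsPGroup.of_card (Nat.eq_prime_pow_of_unique_prime_dvd hc0 (fun {q} hq hqd => hcon q hq hqd))
  haveI : Fact p.Prime := ⟨hp⟩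
  haveI : Fact q.Prime := ⟨hq⟩
  have sub : ∀ (r : ℕ), r.Prime → ∀ a : Gal(K/ℚ), orderOf a = r → ∃ n : ℕ, 0 < n ∧ ∀ ζ : Ω, IsPrimitiveRoot ζ n → 
      ∀ x ∈ IntermediateField.fixedField (Subgroup.zpowers a), f x ∈ IntermediateField.adjoin ℚ {ζ} := by
    intro r hr a ha
    let E := IntermediateField.fixedField (Subgroup.zpowers a)
    haveI := normal_of_comm hcomm (Subgroup.zpowers a)
    haveI : IsGalois ℚ E := IsGalois.of_fixedField_normal_subgroup (Subgroup.zpowers a)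
    have hfin : Module.finrank ℚ E * r = Module.finrank ℚ K := by
      rw [← Module.finrank_mul_finrank ℚ E K, IntermediateField.finrank_fixedField_eq_card, Nat.card_zpowers, ha]
    have hlt : Module.finrank ℚ E < d := by
      have h0 : 0 < Module.finrank ℚ E := Module.finrank_pos
      have := hr.two_le
      nlinarith
    obtain ⟨n, hn, h⟩ := ih _ hlt E (f.comp (E.val)) (descend_comm hcomm E) rfl
    exact ⟨n, hn, fun ζ hζ x hx => h ζ hζ ⟨x, hx⟩⟩
  obtain ⟨a, ha⟩ := exists_prime_orderOf_dvd_card' p hpd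
  obtain ⟨b, hb⟩ := exists_prime_orderOf_dvd_card' q hqd
  obtain ⟨n1, hn1, h1⟩ := sub p hp a ha
  obtain ⟨n2, hn2, h2⟩ := sub q hq b hb
  have hinf : Subgroup.zpowers a ⊓ Subgroup.zpowers b = ⊥ := by
    rw [← disjoint_iff]
    apply Subgroup.disjoint_of_coprime_natCard
    rw [Nat.card_zpowers, Nat.card_zpowers, ha, hb]
    exact (Nat.coprime_primes hp hq).mpr hqp.symm
  have hsup : IntermediateField.fixedField (Subgroup.zpowers a) ⊔ IntermediateField.fixedField (Subgroup.zpowers b) = ⊤ := by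
    rw [← IsGalois.fixedField_fixingSubgroup (IntermediateField.fixedField (Subgroup.zpowers a) ⊔ IntermediateField.fixedField (Subgroup.zpowers b)),
      IntermediateField.fixingSubgroup_sup, IntermediateField.fixingSubgroup_fixedField,
      IntermediateField.fixingSubgroup_fixedField, hinf, IntermediateField.fixedField_bot]
  refine ⟨n1 * n2, by positivity, fun ζ hζ x => ?_⟩
  have hmem : ∀ k : ℕ, IntermediateField.adjoin ℚ {ζ ^ k} ≤ IntermediateField.adjoin ℚ {ζ} := by
    intro k
    rw [IntermediateField.adjoin_simple_le_iff]
    exact pow_mem (IntermediateField.mem_adjoin_simple_self ℚ ζ) k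
  have hle : (⊤ : IntermediateField ℚ K) ≤ (IntermediateField.adjoin ℚ {ζ}).comap f := by
    rw [← hsup]
    refine sup_le ?_ ?_
    · intro y hy
      exact hmem n2 (h1 _ (hζ.pow (by positivity) (mul_comm _ _)) y hy)
    · intro y hy
      exact hmem n1 (h2 _ (hζ.pow (by positivity) rfl) y hy)
  exact hle (x := x) trivial
end KW
end

section
open NumberField Polynomial
set_option linter.unusedSectionVars false
set_option linter.style.haveILetI false

namespace KW

theorem kw_alg {Ω : Type} [Field Ω] [CharZero Ω] (K : Type) [Field K] [inst : Algebra ℚ K] [FiniteDimensional ℚ K]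
    [IsGalois ℚ K] (f : K →ₐ[ℚ] Ω) (hcomm : ∀ σ τ : Gal(K/ℚ), σ * τ = τ * σ) :
    ∃ n : ℕ, 0 < n ∧ ∀ ζ : Ω, IsPrimitiveRoot ζ n → ∀ x : K, f x ∈ IntermediateField.adjoin ℚ {ζ} := by
  have hc : CharZero K := algebraRat.charZero K
  obtain rfl : inst = @DivisionRing.toRatAlgebra K _ hc := Subsingleton.elim _ _
  haveI : NumberField K := ⟨⟩
  exact kw (Ω := Ω) _ K f hcomm rfl

theorem split_facts (k : Type) [Field k] (q : k[X]) (hq : q.Separable) (Ω : Type) [Field Ω] [Algebra k Ω] [IsAlgClosed Ω] :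
    FiniteDimensional k q.SplittingField ∧ IsGalois k q.SplittingField ∧ 
    ∃ f : q.SplittingField →ₐ[k] Ω, f '' q.rootSet q.SplittingField = q.rootSet Ω := by
  let f : q.SplittingField →ₐ[k] Ω := IsSplittingField.lift _ q (IsAlgClosed.splits _)
  exact ⟨IsSplittingField.finiteDimensional _ q, IsGalois.of_separable_splitting_field hq, f,
    Splits.image_rootSet (SplittingField.splits q) f⟩

theorem back {Ω : Type} [Field Ω] [CharZero Ω] [IsAlgClosed Ω] (d : Ω) (hd : IsIntegral ℚ d)
    (hcomm : ∀ σ τ : (minpoly ℚ d).Gal, σ * τ = τ * σ) :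
    ∃ n : ℕ, 0 < n ∧ ∀ ζ : Ω, IsPrimitiveRoot ζ n → d ∈ Algebra.adjoin ℚ ({ζ} : Set Ω) := by
  obtain ⟨hfd, hgal, f, hf⟩ := split_facts ℚ (minpoly ℚ d) (minpoly.irreducible hd).separable Ω
  obtain ⟨n, hn, h⟩ := @kw_alg Ω _ _ (minpoly ℚ d).SplittingField _ _ hfd hgal f hcomm
  refine ⟨n, hn, fun ζ hζ => ?_⟩
  have hdr : d ∈ (minpoly ℚ d).rootSet Ω := by
    rw [mem_rootSet]
    exact ⟨minpoly.ne_zero hd, minpoly.aeval ℚ d⟩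
  rw [← hf] at hdr
  obtain ⟨x, -, hx⟩ := hdr
  have h1 := h ζ hζ x
  have h2 : f x = d := hx
  rw [h2] at h1
  rwa [← IntermediateField.mem_toSubalgebra, IntermediateField.adjoin_simple_toSubalgebra_of_isAlgebraic
    ((hζ.isIntegral hn).tower_top.isAlgebraic)] at h1

theorem forth {Ω : Type} [Field Ω] [CharZero Ω] (d : Ω) (n : ℕ) (hn : 0 < n) (ζ : Ω) (hζ : IsPrimitiveRoot ζ n)
    (hd : d ∈ Algebra.adjoin ℚ ({ζ} : Set Ω)) : ∀ σ τ : (minpoly ℚ d).Gal, σ * τ = τ * σ := by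
  haveI : NeZero n := ⟨hn.ne'⟩
  let L := IntermediateField.adjoin ℚ {ζ}
  haveI hcyc : IsCyclotomicExtension {n} ℚ L :=
    (IntermediateField.isCyclotomicExtension_singleton_iff_eq_adjoin n ℚ Ω L hζ).mpr rfl
  haveI : IsGalois ℚ L := IsCyclotomicExtension.isGalois {n} ℚ L
  have hdL : d ∈ L := IntermediateField.algebra_adjoin_le_adjoin ℚ _ hd
  let y : L := ⟨d, hdL⟩
  have hmin : minpoly ℚ d = minpoly ℚ y := minpoly.algebraMap_eq (algebraMap L Ω).injective y
  haveI : Fact (((minpoly ℚ d).map (algebraMap ℚ L)).Splits) := ⟨by rw [hmin]; exact Normal.splits inferInstance y⟩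
  let z : L := ⟨ζ, IntermediateField.mem_adjoin_simple_self ℚ ζ⟩
  have hz : IsPrimitiveRoot z n := hζ.of_map_of_injective (f := algebraMap L Ω) (algebraMap L Ω).injective
  intro σ τ
  obtain ⟨s, rfl⟩ := Polynomial.Gal.restrict_surjective (minpoly ℚ d) L σ
  obtain ⟨t, rfl⟩ := Polynomial.Gal.restrict_surjective (minpoly ℚ d) L τ
  rw [← map_mul, ← map_mul]
  congr 1
  apply hz.autToPow_injective ℚ
  rw [map_mul, map_mul, mul_comm]
end KW
end

end KWhelpers

/-- An algebraic integer `d` lies in some cyclotomic field if and only if the Galois group of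
the splitting field over `ℚ` of its minimal polynomial is abelian. -/
theorem stmt_0 (d : ℂ) (hd : IsIntegral ℤ d) :
    (∃ (n : ℕ) (ζ : ℂ), 0 < n ∧ IsPrimitiveRoot ζ n ∧ d ∈ Algebra.adjoin ℚ ({ζ} : Set ℂ)) ↔
    ∀ σ τ : (minpoly ℚ d).Gal, σ * τ = τ * σ := by
  constructor
  · rintro ⟨n, ζ, hn, hζ, h⟩
    exact KW.forth d n hn ζ hζ h
  · intro h
    obtain ⟨n, hn, hh⟩ := KW.back d hd.tower_top h
    have hζ := Complex.isPrimitiveRoot_exp n hn.ne'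
    exact ⟨n, _, hn, hζ, hh _ hζ⟩
end

section
/- The polynomial r₂(x) = x⁶ − 13x⁵ + 63x⁴ − 140x³ + 142x² − 59x + 7 is irreducible over ℚ and its Galois group over ℚ is the full symmetric group S₆; in particular its Galois group is non-abelian, so its roots are not cyclotomic integers. -/
open Polynomial

section helpers

open NumberField Equiv MulAction


theorem frob_exists (K : Type) [Field K] [NumberField K] [IsGalois ℚ K] (p : ℕ)
    [Fact p.Prime] : ∃ (k : Type) (_ : Field k) (_ : Finite k) (_ : Algebra (ZMod p) k)
      (φ : 𝓞 K →+* k) (σ : Gal(K/ℚ)), ∀ x : 𝓞 K, φ (σ • x) = φ x ^ p := by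
  have hp : (Ideal.span {(p : ℤ)}).IsMaximal := Int.ideal_span_isMaximal_of_prime p
  obtain ⟨Q, hQ, hQ'⟩ := Ideal.exists_maximal_ideal_liesOver_of_isIntegral
    (Ideal.span {(p : ℤ)}) (S := 𝓞 K)
  have hpQ : (p : 𝓞 K) ∈ Q := by
    have : (p : ℤ) ∈ Q.under ℤ := by
      rw [← hQ'.over]; exact Ideal.mem_span_singleton_self _
    simpa [Ideal.under, Ideal.mem_comap] using this
  have hQ0 : Q ≠ ⊥ := by
    rintro rfl
    have h0 : (p : 𝓞 K) = 0 := by simpa using hpQ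
    exact (Fact.out : p.Prime).ne_zero (by exact_mod_cast h0)
  have : Finite (𝓞 K ⧸ Q) := Ring.HasFiniteQuotients.finiteQuotient hQ0
  obtain ⟨σ, hσ⟩ := IsArithFrobAt.exists_of_isInvariant ℤ Gal(K/ℚ) Q
  let _ := Ideal.Quotient.field Q
  have : CharP (𝓞 K ⧸ Q) p := by
    refine (CharP.charP_iff_prime_eq_zero Fact.out).2 ?_
    rw [← map_natCast (Ideal.Quotient.mk Q)]
    exact Ideal.Quotient.eq_zero_iff_mem.2 hpQ
  refine ⟨𝓞 K ⧸ Q, inferInstance, inferInstance, ZMod.algebra _ p, Ideal.Quotient.mk Q, σ, ?_⟩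
  intro x
  have h := hσ x
  have hc : Nat.card (ℤ ⧸ Q.under ℤ) = p := by
    rw [← hQ'.over]
    rw [Nat.card_congr (Int.quotientSpanNatEquivZMod p).toEquiv, Nat.card_zmod]
  rw [hc] at h
  rw [← map_pow, Ideal.Quotient.eq]
  exact h

theorem splits_int (K : Type*) [Field K] [NumberField K] (f : ℤ[X]) (hf : f.Monic)
    (hs : (f.map (algebraMap ℤ K)).Splits) : (f.map (algebraMap ℤ (𝓞 K))).Splits := by
  refine Splits.of_splits_map_of_injective (i := algebraMap (𝓞 K) K)
    (RingOfIntegers.coe_injective) ?_ ?_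
  · rwa [Polynomial.map_map, ← IsScalarTower.algebraMap_eq]
  · intro a ha
    rw [Polynomial.map_map, ← IsScalarTower.algebraMap_eq] at ha
    have : IsIntegral ℤ a := ⟨f, hf, by
      rw [mem_roots', IsRoot, eval_map] at ha; exact ha.2⟩
    exact ⟨⟨a, this⟩, rfl⟩

instance fact5 : Fact (Nat.Prime 5) := ⟨by norm_num⟩
instance fact751 : Fact (Nat.Prime 751) := ⟨by norm_num⟩

theorem irr2 : Irreducible (X ^ 6 + X ^ 5 + X ^ 4 + X + 1 : (ZMod 2)[X]) := by
  have hd : (X ^ 6 + X ^ 5 + X ^ 4 + X + 1 : (ZMod 2)[X]).natDegree = 6 := by compute_degree!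
  have hm : (X ^ 6 + X ^ 5 + X ^ 4 + X + 1 : (ZMod 2)[X]).Monic := by monicity!
  rw [hm.irreducible_iff_natDegree']
  refine ⟨fun h => by rw [h] at hd; simp at hd, ?_⟩
  intro f g hf hg hfg hgd
  rw [hd, Finset.mem_Ioc] at hgd
  have hdeg : f.natDegree + g.natDegree = 6 := by rw [← hf.natDegree_mul hg, hfg, hd]
  have e : ∀ k, (f * g).coeff k = (X ^ 6 + X ^ 5 + X ^ 4 + X + 1 : (ZMod 2)[X]).coeff k := by
    intro k; rw [hfg]
  have hfc := hf.coeff_natDegree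
  have hgc := hg.coeff_natDegree
  have hf0 : ∀ k, f.natDegree < k → f.coeff k = 0 := fun k h => coeff_eq_zero_of_natDegree_lt h
  have hg0 : ∀ k, g.natDegree < k → g.coeff k = 0 := fun k h => coeff_eq_zero_of_natDegree_lt h
  have e0 := e 0
  have e1 := e 1
  have e2 := e 2
  have e3 := e 3
  have e4 := e 4
  have e5 := e 5
  simp only [coeff_mul, Finset.Nat.antidiagonal_succ, Finset.Nat.antidiagonal_zero] at e0 e1 e2 e3 e4 e5
  simp [coeff_X, coeff_one] at e0 e1 e2 e3 e4 e5
  have h3 : g.natDegree = 1 ∨ g.natDegree = 2 ∨ g.natDegree = 3 := by omega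
  rcases h3 with h | h | h
  · have h' : f.natDegree = 5 := by omega
    rw [h] at hgc hg0
    rw [h'] at hfc hf0
    simp only [hfc, hgc, hg0 2 (by norm_num), hg0 3 (by norm_num), hg0 4 (by norm_num), hg0 5 (by norm_num)] at e0 e1 e2 e3 e4 e5
    generalize f.coeff 0 = a0, f.coeff 1 = a1, f.coeff 2 = a2, f.coeff 3 = a3, f.coeff 4 = a4, g.coeff 0 = b0 at e0 e1 e2 e3 e4 e5
    revert a0 a1 a2 a3 a4 b0
    decide
  · have h' : f.natDegree = 4 := by omega
    rw [h] at hgc hg0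
    rw [h'] at hfc hf0
    simp only [hfc, hgc, hg0 3 (by norm_num), hg0 4 (by norm_num), hg0 5 (by norm_num), hf0 5 (by norm_num)] at e0 e1 e2 e3 e4 e5
    generalize f.coeff 0 = a0, f.coeff 1 = a1, f.coeff 2 = a2, f.coeff 3 = a3, g.coeff 1 = b1, g.coeff 0 = b0 at e0 e1 e2 e3 e4 e5
    revert a0 a1 a2 a3 b1 b0
    decide
  · have h' : f.natDegree = 3 := by omega
    rw [h] at hgc hg0
    rw [h'] at hfc hf0
    simp only [hfc, hgc, hg0 4 (by norm_num), hg0 5 (by norm_num), hf0 4 (by norm_num), hf0 5 (by norm_num)] at e0 e1 e2 e3 e4 e5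
    generalize f.coeff 0 = a0, f.coeff 1 = a1, f.coeff 2 = a2, g.coeff 2 = b2, g.coeff 1 = b1, g.coeff 0 = b0 at e0 e1 e2 e3 e4 e5
    revert a0 a1 a2 b2 b1 b0
    decide

theorem irr5 : Irreducible (X ^ 5 + X ^ 4 + 2 * X ^ 3 + 3 * X ^ 2 + 4 * X + 2 : (ZMod 5)[X]) := by
  have hd : (X ^ 5 + X ^ 4 + 2 * X ^ 3 + 3 * X ^ 2 + 4 * X + 2 : (ZMod 5)[X]).natDegree = 5 := by compute_degree!
  have hm : (X ^ 5 + X ^ 4 + 2 * X ^ 3 + 3 * X ^ 2 + 4 * X + 2 : (ZMod 5)[X]).Monic := by monicity!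
  rw [hm.irreducible_iff_natDegree']
  refine ⟨fun h => by rw [h] at hd; simp at hd, ?_⟩
  intro f g hf hg hfg hgd
  rw [hd, Finset.mem_Ioc] at hgd
  have hdeg : f.natDegree + g.natDegree = 5 := by rw [← hf.natDegree_mul hg, hfg, hd]
  have e : ∀ k, (f * g).coeff k = (X ^ 5 + X ^ 4 + 2 * X ^ 3 + 3 * X ^ 2 + 4 * X + 2 : (ZMod 5)[X]).coeff k := by
    intro k; rw [hfg]
  have hfc := hf.coeff_natDegree
  have hgc := hg.coeff_natDegree
  have hf0 : ∀ k, f.natDegree < k → f.coeff k = 0 := fun k h => coeff_eq_zero_of_natDegree_lt h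
  have hg0 : ∀ k, g.natDegree < k → g.coeff k = 0 := fun k h => coeff_eq_zero_of_natDegree_lt h
  have e0 := e 0
  have e1 := e 1
  have e2 := e 2
  have e3 := e 3
  have e4 := e 4
  simp only [coeff_mul, Finset.Nat.antidiagonal_succ, Finset.Nat.antidiagonal_zero] at e0 e1 e2 e3 e4
  simp [coeff_X, coeff_one, coeff_ofNat_mul, coeff_ofNat_zero, coeff_ofNat_succ] at e0 e1 e2 e3 e4
  have h3 : g.natDegree = 1 ∨ g.natDegree = 2 := by omega
  rcases h3 with h | h
  · have h' : f.natDegree = 4 := by omega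
    rw [h] at hgc hg0
    rw [h'] at hfc hf0
    simp only [hfc, hgc, hg0 2 (by norm_num), hg0 3 (by norm_num), hg0 4 (by norm_num), hf0 5 (by norm_num)] at e0 e1 e2 e3 e4
    have q : ∀ b h3 h2 h1 h0 : ZMod 5, h3 = 1 - b → h2 = 2 - b * h3 → h1 = 3 - b * h2 → h0 = 4 - b * h1 → h0 * b ≠ 2 := by
      intro b h3 h2 h1 h0 r3 r2 r1 r0
      subst r3 r2 r1 r0
      revert b
      decide
    exact q (g.coeff 0) (f.coeff 3) (f.coeff 2) (f.coeff 1) (f.coeff 0)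
      (by linear_combination e4) (by linear_combination e3) (by linear_combination e2) (by linear_combination e1) e0
  · have h' : f.natDegree = 3 := by omega
    rw [h] at hgc hg0
    rw [h'] at hfc hf0
    simp only [hfc, hgc, hg0 3 (by norm_num), hg0 4 (by norm_num), hf0 4 (by norm_num), hf0 5 (by norm_num)] at e0 e1 e2 e3 e4
    have q : ∀ b a h2 h1 h0 : ZMod 5, h2 = 1 - a → h1 = 2 - b - a * h2 → h0 = 3 - b * h2 - a * h1 → 
       h0 * a + h1 * b = 4 → h0 * b ≠ 2 := by
      intro b a h2 h1 h0 r2 r1 r0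
      subst r2 r1 r0
      revert b a
      decide
    exact q (g.coeff 0) (g.coeff 1) (f.coeff 2) (f.coeff 1) (f.coeff 0)
      (by linear_combination e4) (by linear_combination e3) (by linear_combination e2) (by linear_combination e1) e0

theorem grp_lemma {α : Type*} [Fintype α] [DecidableEq α] (hα : Fintype.card α = 6)
    (H : Subgroup (Perm α)) (ht : MulAction.IsPretransitive H α) (h5 : 5 ∣ Nat.card H)
    (g : Perm α) (hg : g ∈ H) (hs : g.IsSwap) : H = ⊤ := by
  have : Fact (Nat.Prime 5) := ⟨by norm_num⟩
  obtain ⟨s, hs5⟩ := exists_prime_orderOf_dvd_card' 5 h5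
  have ho : orderOf (s : Perm α) = 5 := by rw [Subgroup.orderOf_coe, hs5]
  have hc : (s : Perm α).IsCycle := Perm.isCycle_of_prime_order' (by rw [ho]; norm_num) (by
    rw [ho, hα]; norm_num)
  have hsc : (s : Perm α).support.card = 5 := by rw [← hc.orderOf, ho]
  have hcc : ((s : Perm α).supportᶜ).card = 1 := by rw [Finset.card_compl, hsc, hα]
  obtain ⟨a, ha⟩ := Finset.card_eq_one.1 hcc
  have hfix : ∀ x, (s : Perm α) x = x ↔ x = a := by
    intro x
    have : x ∈ (s : Perm α).supportᶜ ↔ x = a := by rw [ha]; simp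
    rwa [Finset.mem_compl, Perm.notMem_support] at this
  have h2 : IsMultiplyPretransitive H α 2 := by
    rw [is_two_pretransitive_iff]
    have key : ∀ x y : α, x ≠ y → ∀ z, z ≠ a → ∃ m : H, m • x = a ∧ m • y = z := by
      intro x y hxy z hz
      obtain ⟨m, hm⟩ := exists_smul_eq H x a
      have hy : m • y ≠ a := by rw [← hm]; intro h; exact hxy (smul_left_cancel m h).symm
      obtain ⟨i, hi⟩ := hc.exists_zpow_eq (x := m • y) (y := z) (by rwa [Ne, hfix]) (by rwa [Ne, hfix])
      refine ⟨s ^ i * m, ?_, ?_⟩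
      · rw [mul_smul, hm]
        have : (s : Perm α) a = a := (hfix a).2 rfl
        exact Perm.zpow_apply_eq_self_of_apply_eq_self this i
      · rw [mul_smul]; exact hi
    obtain ⟨z, hz⟩ : ∃ z, z ≠ a := by
      have : Nontrivial α := Fintype.one_lt_card_iff_nontrivial.1 (by omega)
      exact exists_ne a
    intro x y x' y' h h'
    obtain ⟨m, hm, hm'⟩ := key x y h z hz
    obtain ⟨n, hn, hn'⟩ := key x' y' h' z hz
    exact ⟨n⁻¹ * m, by rw [mul_smul, hm, inv_smul_eq_iff, hn], by rw [mul_smul, hm', inv_smul_eq_iff, hn']⟩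
  have hp := isPreprimitive_of_is_two_pretransitive h2
  exact Perm.subgroup_eq_top_of_isPreprimitive_of_isSwap_mem hp g hs hg

theorem cyc_lemma (f : ℚ[X]) (hf : Irreducible f) (z : ℂ) (hz : aeval z f = 0) (n : ℕ) (ζ : ℂ)
   (hn : 0 < n) (hζ : IsPrimitiveRoot ζ n) (h : z ∈ Algebra.adjoin ℚ ({ζ} : Set ℂ)) (a b : f.Gal) :
   a * b = b * a := by
  have : NeZero n := ⟨hn.ne'⟩
  let L := IntermediateField.adjoin ℚ ({ζ} : Set ℂ)
  have : IsCyclotomicExtension {n} ℚ L := by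
    have hi : IsIntegral ℚ ζ := (hζ.isIntegral hn).tower_top
    change IsCyclotomicExtension {n} ℚ (IntermediateField.adjoin ℚ {ζ}).toSubalgebra
    rw [IntermediateField.adjoin_simple_toSubalgebra_of_isAlgebraic hi.isAlgebraic]
    exact hζ.adjoin_isCyclotomicExtension ℚ
  have : IsAbelianGalois ℚ L := IsCyclotomicExtension.isAbelianGalois {n} ℚ L
  have hzL : z ∈ L := IntermediateField.algebra_adjoin_le_adjoin ℚ _ h
  have hz' : aeval (⟨z, hzL⟩ : L) f = 0 := by
    apply (algebraMap L ℂ).injective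
    rw [← aeval_algebraMap_apply, map_zero]
    exact hz
  have hs : (f.map (algebraMap ℚ L)).Splits := by
    have hm := minpoly.eq_of_irreducible hf hz'
    have := Normal.splits (inferInstance : Normal ℚ L) (⟨z, hzL⟩ : L)
    rw [← hm, Polynomial.map_mul] at this
    refine Splits.of_dvd this ?_ (dvd_mul_right _ _)
    rw [← Polynomial.map_mul, hm, Polynomial.map_ne_zero_iff (algebraMap ℚ L).injective]
    exact minpoly.ne_zero (Algebra.IsIntegral.isIntegral _)
  have : Fact ((f.map (algebraMap ℚ L)).Splits) := ⟨hs⟩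
  obtain ⟨a, rfl⟩ := Gal.restrict_surjective f L a
  obtain ⟨b, rfl⟩ := Gal.restrict_surjective f L b
  rw [← map_mul, ← map_mul, mul_comm' a b]

/-- The integral model of the polynomial. -/
noncomputable def fZ : ℤ[X] :=
  X ^ 6 - 13 * X ^ 5 + 63 * X ^ 4 - 140 * X ^ 3 + 142 * X ^ 2 - 59 * X + 7

theorem fZ_monic : fZ.Monic := by unfold fZ; monicity!

theorem fZ_deg : fZ.natDegree = 6 := by unfold fZ; compute_degree!

theorem fZ_map {R : Type*} [CommRing R] (i : ℤ →+* R) : fZ.map i =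
    X ^ 6 - 13 * X ^ 5 + 63 * X ^ 4 - 140 * X ^ 3 + 142 * X ^ 2 - 59 * X + 7 := by
  simp [fZ]

theorem fZ_sep {R : Type*} [Field R] (i : ℤ →+* R) (h : (7606541 : R) ≠ 0) :
    (fZ.map i).Separable := by
  have key : ((-30908082) + (95044794) * X + (-79054647) * X ^ 2 + (24832292) * X ^ 3
        + (-2625900) * X ^ 4) * fZ +
      ((-3795985) + (23912384) * X + (-36687157) * X ^ 2 + (21061023) * X ^ 3
        + (-5086957) * X ^ 4 + (437650) * X ^ 5) * derivative fZ = C 7606541 := by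
    simp only [fZ, derivative_add, derivative_sub, derivative_mul, derivative_X_pow,
      derivative_X, derivative_ofNat, map_ofNat, map_natCast]
    push_cast
    ring
  have k2 := congrArg (Polynomial.map i) key
  rw [Polynomial.map_add, Polynomial.map_mul, Polynomial.map_mul, ← derivative_map, map_C] at k2
  have hi : i 7606541 = (7606541 : R) := by simp
  rw [hi] at k2
  rw [separable_def]
  have hu : C (7606541 : R)⁻¹ * C (7606541 : R) = 1 := by
    rw [← C_mul, inv_mul_cancel₀ h, C_1]
  generalize Polynomial.map i ((-30908082) + (95044794) * X + (-79054647) * X ^ 2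
    + (24832292) * X ^ 3 + (-2625900) * X ^ 4) = u at k2
  generalize Polynomial.map i ((-3795985) + (23912384) * X + (-36687157) * X ^ 2
    + (21061023) * X ^ 3 + (-5086957) * X ^ 4 + (437650) * X ^ 5) = v at k2
  exact ⟨C (7606541 : R)⁻¹ * u, C (7606541 : R)⁻¹ * v, by
    rw [mul_assoc, mul_assoc, ← mul_add, k2, hu]⟩

theorem fQ_irr : Irreducible (fZ.map (algebraMap ℤ ℚ)) := by
  refine (fZ_monic.irreducible_iff_irreducible_map_fraction_map (K := ℚ)).1 ?_
  refine fZ_monic.irreducible_of_irreducible_map (Int.castRingHom (ZMod 2)) _ ?_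
  have : fZ.map (Int.castRingHom (ZMod 2)) = X ^ 6 + X ^ 5 + X ^ 4 + X + 1 := by
    rw [fZ_map]
    have h2 : (2 : (ZMod 2)[X]) = 0 := by
      have : (2 : ZMod 2) = 0 := by decide
      rw [← map_ofNat C, this, map_zero]
    linear_combination (-7 * X ^ 5 + 31 * X ^ 4 - 70 * X ^ 3 + 71 * X ^ 2 - 30 * X + 3) * h2
  rw [this]
  exact irr2

theorem five_dvd (K : Type) [Field K] [NumberField K] [IsGalois ℚ K]
    (hs : (fZ.map (algebraMap ℤ K)).Splits) : 5 ∣ Nat.card Gal(K/ℚ) := by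
  obtain ⟨k, _, _, _, φ, σ, hσ⟩ := frob_exists K 5
  have hs' := (splits_int K fZ fZ_monic hs).map φ
  rw [Polynomial.map_map] at hs'
  have h5 : (5 : k[X]) = 0 := by
    have : (5 : ZMod 5) = 0 := by decide
    have h := congrArg (algebraMap (ZMod 5) k) this
    rw [map_ofNat, map_zero] at h
    rw [← map_ofNat C, h, map_zero]
  set g : (ZMod 5)[X] := X ^ 5 + X ^ 4 + 2 * X ^ 3 + 3 * X ^ 2 + 4 * X + 2 with hg
  have hgd : g.natDegree = 5 := by rw [hg]; compute_degree!
  have hfac : fZ.map (φ.comp (algebraMap ℤ (𝓞 K))) = (X + 1) * g.map (algebraMap (ZMod 5) k) := by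
    rw [fZ_map, hg]
    simp only [Polynomial.map_add, Polynomial.map_mul, Polynomial.map_pow, map_X,
      Polynomial.map_ofNat]
    linear_combination (-3 * X ^ 5 + 12 * X ^ 4 - 29 * X ^ 3 + 27 * X ^ 2 - 13 * X + 1) * h5
  have hgs : (g.map (algebraMap (ZMod 5) k)).Splits := by
    refine hs'.of_dvd (fZ_monic.map _).ne_zero ?_
    rw [hfac]
    exact dvd_mul_left _ _
  obtain ⟨β, hβ⟩ := hgs.exists_eval_eq_zero (by
    rw [degree_map]
    intro h
    have h0 : g.natDegree = 0 := natDegree_eq_of_degree_eq_some h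
    omega)
  have hβr : β ∈ (fZ.map (φ.comp (algebraMap ℤ (𝓞 K)))).roots := by
    rw [mem_roots (fZ_monic.map _).ne_zero, IsRoot, hfac, eval_mul, hβ, mul_zero]
  rw [← Polynomial.map_map, Splits.roots_map_of_ne_zero (splits_int K fZ fZ_monic hs)
    ((fZ_monic.map _).map _).ne_zero, Multiset.mem_map] at hβr
  obtain ⟨α, -, rfl⟩ := hβr
  have hpow : ∀ n : ℕ, φ (σ ^ n • α) = φ α ^ 5 ^ n := by
    intro n
    induction n with
    | zero => simp
    | succ n ih => rw [pow_succ', mul_smul, hσ, ih, ← pow_mul, pow_succ]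
  have h1 := hpow (orderOf σ)
  rw [pow_orderOf_eq_one, one_smul] at h1
  have hdvd : g ∣ X ^ (Nat.card (ZMod 5)) ^ (orderOf σ) - X := by
    have e : minpoly (ZMod 5) (φ α) ∣ g := minpoly.dvd _ _ (by rw [aeval_def, ← eval_map, hβ])
    have e' : g ∣ minpoly (ZMod 5) (φ α) :=
      (irr5.dvd_comm (minpoly.irreducible (Algebra.IsIntegral.isIntegral _))).2 e
    refine e'.trans (minpoly.dvd _ _ ?_)
    rw [Nat.card_zmod]
    simp [← h1]
  have := irr5.natDegree_dvd_of_dvd_X_pow_card_pow_sub_X hdvd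
  rw [hgd] at this
  exact this.trans (orderOf_dvd_natCard σ)

theorem quad_irr : Irreducible (X ^ 2 - 466 * X + 163 : (ZMod 751)[X]) := by
  have hd : (X ^ 2 - 466 * X + 163 : (ZMod 751)[X]).natDegree = 2 := by compute_degree!
  refine irreducible_of_degree_le_three_of_not_isRoot (by rw [hd]; decide) ?_
  intro x hx
  simp only [IsRoot, eval_add, eval_sub, eval_mul, eval_pow, eval_X, eval_ofNat] at hx
  revert hx
  revert x
  decide +kernel

theorem swap_exists (K : Type) [Field K] [NumberField K] [IsGalois ℚ K]
    (hs : (fZ.map (algebraMap ℤ K)).Splits) : ∃ (σ : Gal(K/ℚ)) (s : Finset K), s.card = 4 ∧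
      (∀ x ∈ s, aeval x fZ = 0 ∧ σ x = x) ∧ ∃ y, aeval y fZ = 0 ∧ σ y ≠ y := by
  classical
  obtain ⟨k, _, _, _, φ, σ, hσ⟩ := frob_exists K 751
  have hsO := splits_int K fZ fZ_monic hs
  have hs' := hsO.map φ
  have hne : (fZ.map (algebraMap ℤ (𝓞 K))).map φ ≠ 0 := ((fZ_monic.map _).map _).ne_zero
  have hroots := Splits.roots_map_of_ne_zero hsO hne
  rw [Polynomial.map_map] at hs' hroots hne
  have h751 : (751 : k[X]) = 0 := by
    have : (751 : ZMod 751) = 0 := by decide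
    have h := congrArg (algebraMap (ZMod 751) k) this
    rw [map_ofNat, map_zero] at h
    rw [← map_ofNat C, h, map_zero]
  set g : (ZMod 751)[X] := X ^ 2 - 466 * X + 163 with hg
  have hgd : g.natDegree = 2 := by rw [hg]; compute_degree!
  have hfac : fZ.map (φ.comp (algebraMap ℤ (𝓞 K))) =
      (X - 162) * (X - 174) * (X - 285) * (X - 428) * g.map (algebraMap (ZMod 751) k) := by
    rw [fZ_map, hg]
    simp only [Polynomial.map_add, Polynomial.map_sub, Polynomial.map_mul, Polynomial.map_pow,
      map_X, Polynomial.map_ofNat]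
    linear_combination ((-746277863) * X ^ 0 + (2146788343) * X ^ 1 + (-42565550) * X ^ 2 + (323397) * X ^ 3 + (-1170) * X ^ 4 + (2) * X ^ 5 + (0) * X ^ 6) * h751
  have hsep : (fZ.map (φ.comp (algebraMap ℤ (𝓞 K)))).Separable := by
    apply fZ_sep
    have h : (7606541 : ZMod 751) ≠ 0 := by decide
    intro h'
    apply h
    apply (algebraMap (ZMod 751) k).injective
    rw [map_ofNat, map_zero, h']
  have hnd := nodup_roots hsep
  rw [hroots] at hnd
  have hinj := Multiset.inj_on_of_nodup_map hnd
  have hmem : ∀ a : 𝓞 K, a ∈ (fZ.map (algebraMap ℤ (𝓞 K))).roots ↔ aeval a fZ = 0 := by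
    intro a
    rw [mem_roots (fZ_monic.map _).ne_zero, IsRoot, eval_map_algebraMap]
  have hlift : ∀ β : k, eval β (fZ.map (φ.comp (algebraMap ℤ (𝓞 K)))) = 0 →
      ∃ α : 𝓞 K, aeval α fZ = 0 ∧ φ α = β := by
    intro β hβ
    have : β ∈ (fZ.map (φ.comp (algebraMap ℤ (𝓞 K)))).roots := by
      rw [mem_roots hne]; exact hβ
    rw [hroots, Multiset.mem_map] at this
    obtain ⟨α, h, h'⟩ := this
    exact ⟨α, (hmem α).1 h, h'⟩
  have hcoe : ∀ α : 𝓞 K, aeval α fZ = 0 → aeval (α : K) fZ = 0 := by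
    intro α h
    rw [aeval_algebraMap_apply, h, map_zero]
  have hfix : ∀ c : ZMod 751, c ∈ ({162, 174, 285, 428} : Finset (ZMod 751)) →
      ∃ α : 𝓞 K, (aeval α fZ = 0 ∧ σ (α : K) = α) ∧ φ α = algebraMap (ZMod 751) k c := by
    intro c hc
    obtain ⟨α, h, h'⟩ := hlift (algebraMap (ZMod 751) k c) (by
      rw [hfac]
      simp only [Finset.mem_insert, Finset.mem_singleton] at hc
      rcases hc with rfl | rfl | rfl | rfl <;>
        simp only [eval_mul, eval_sub, eval_X, eval_ofNat, map_ofNat, sub_self, zero_mul, mul_zero])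
    refine ⟨α, ⟨h, ?_⟩, h'⟩
    have h1 : φ (σ • α) = φ α := by
      rw [hσ, h', ← map_pow, ZMod.pow_card]
    have h2 : aeval (σ • α) fZ = 0 := by
      have := congrArg (MulSemiringAction.toAlgHom ℤ (𝓞 K) σ) h
      rw [← aeval_algHom_apply, map_zero] at this
      exact this
    have h3 := hinj _ ((hmem _).2 h2) _ ((hmem _).2 h) h1
    exact congrArg (fun x : 𝓞 K => (x : K)) h3
  choose! F hF hF' using hfix
  refine ⟨σ, ({162, 174, 285, 428} : Finset (ZMod 751)).image (fun c => (F c : K)), ?_, ?_, ?_⟩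
  · rw [Finset.card_image_of_injOn]
    · decide
    · intro c hc d hd hcd
      have h1 : F c = F d := RingOfIntegers.coe_injective hcd
      apply (algebraMap (ZMod 751) k).injective
      rw [← hF' c hc, ← hF' d hd, h1]
  · intro x hx
    obtain ⟨c, hc, rfl⟩ := Finset.mem_image.1 hx
    exact ⟨hcoe _ (hF c hc).1, (hF c hc).2⟩
  · have hgs : (g.map (algebraMap (ZMod 751) k)).Splits := by
      refine hs'.of_dvd hne ?_
      rw [hfac]
      exact dvd_mul_left _ _
    obtain ⟨β, hβ⟩ := hgs.exists_eval_eq_zero (by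
      rw [degree_map]
      intro h
      have h0 : g.natDegree = 0 := natDegree_eq_of_degree_eq_some h
      omega)
    obtain ⟨α, h, rfl⟩ := hlift β (by rw [hfac, eval_mul, hβ, mul_zero])
    refine ⟨α, hcoe α h, ?_⟩
    intro hα
    have h1 : σ • α = α := RingOfIntegers.coe_injective hα
    have h2 := hσ α
    rw [h1] at h2
    have hdvd : g ∣ X ^ (Nat.card (ZMod 751)) ^ 1 - X := by
      have e : minpoly (ZMod 751) (φ α) ∣ g :=
        minpoly.dvd _ _ (by rw [aeval_def, ← eval_map, hβ])
      have e' : g ∣ minpoly (ZMod 751) (φ α) :=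
        (quad_irr.dvd_comm (minpoly.irreducible (Algebra.IsIntegral.isIntegral _))).2 e
      refine e'.trans (minpoly.dvd _ _ ?_)
      rw [Nat.card_zmod, pow_one]
      simp [← h2]
    have := quad_irr.natDegree_dvd_of_dvd_X_pow_card_pow_sub_X hdvd
    rw [hgd] at this
    omega

theorem nf_split (f : ℚ[X]) : NumberField f.SplittingField := by constructor

theorem galois_split (f : ℚ[X]) (hf : f.Separable) : IsGalois ℚ f.SplittingField :=
  have : IsSplittingField ℚ f.SplittingField f := IsSplittingField.splittingField f
  IsGalois.of_separable_splitting_field hf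

theorem gal_lemma (K : Type) [Field K] [NumberField K] [IsGalois ℚ K] (f : ℚ[X])
    (hfZ : f = fZ.map (algebraMap ℤ ℚ))
    [hs : Fact ((f.map (algebraMap ℚ K)).Splits)] :
    Nonempty (f.Gal ≃* Equiv.Perm (Fin 6)) := by
  classical
  have hirr : Irreducible f := hfZ ▸ fQ_irr
  have hmap : f.map (algebraMap ℚ K) = fZ.map (algebraMap ℤ K) := by
    rw [hfZ, Polynomial.map_map, ← IsScalarTower.algebraMap_eq]
  have hsZ : (fZ.map (algebraMap ℤ K)).Splits := hmap ▸ hs.out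
  have haev : ∀ x : K, aeval x f = aeval x fZ := by
    intro x
    rw [hfZ, aeval_map_algebraMap]
  have hmem : ∀ x : K, x ∈ f.rootSet K ↔ aeval x fZ = 0 := by
    intro x
    rw [mem_rootSet_of_ne hirr.ne_zero, haev]
  have hcard : Fintype.card (f.rootSet K) = 6 := by
    rw [card_rootSet_eq_natDegree hirr.separable hs.out, hfZ, fZ_monic.natDegree_map, fZ_deg]
  have hbij : (Gal.galActionHom f K).range = ⊤ := by
    have ht := Gal.galAction_isPretransitive f K hirr
    obtain ⟨σ, s, hs4, hsfix, y, hy, hσy⟩ := swap_exists K hsZ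
    refine grp_lemma hcard _ ?_ ?_ (Gal.galActionHom f K (Gal.restrict f K σ)) ⟨_, rfl⟩ ?_
    · refine ⟨fun x y => ?_⟩
      obtain ⟨g, hg⟩ := ht.exists_smul_eq x y
      exact ⟨⟨Gal.galActionHom f K g, ⟨g, rfl⟩⟩, hg⟩
    · rw [← Nat.card_congr (MonoidHom.ofInjective (Gal.galActionHom_injective f K)).toEquiv]
      have := nf_split f
      have := galois_split f hirr.separable
      have := five_dvd f.SplittingField (by
        have := SplittingField.splits f
        rw [hfZ, Polynomial.map_map, ← IsScalarTower.algebraMap_eq] at this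
        rw [hfZ]
        exact this)
      exact this
    · set τ := Gal.galActionHom f K (Gal.restrict f K σ) with hτ
      have hτa : ∀ x : f.rootSet K, ((τ x : f.rootSet K) : K) = σ x :=
        fun x => Gal.galActionHom_restrict f K σ x
      rw [← Perm.card_support_eq_two]
      apply le_antisymm
      · have hsub : Finset.univ.filter (fun x : f.rootSet K => (x : K) ∈ s) ⊆ τ.supportᶜ := by
          intro x hx
          rw [Finset.mem_compl, Perm.notMem_support]
          apply Subtype.ext
          rw [hτa]
          exact (hsfix x (Finset.mem_filter.1 hx).2).2
        have h4 : (Finset.univ.filter (fun x : f.rootSet K => (x : K) ∈ s)).card = 4 := by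
          rw [← hs4, ← Finset.card_image_of_injective _ Subtype.val_injective]
          congr 1
          ext x
          simp only [Finset.mem_image, Finset.mem_filter, Finset.mem_univ, true_and]
          constructor
          · rintro ⟨a, ha, rfl⟩
            exact ha
          · intro hx
            exact ⟨⟨x, (hmem x).2 (hsfix x hx).1⟩, hx, rfl⟩
        have h5 := Finset.card_le_card hsub
        rw [h4, Finset.card_compl, hcard] at h5
        omega
      · apply Perm.two_le_card_support_of_ne_one
        intro h1
        apply hσy
        have := hτa ⟨y, (hmem y).2 hy⟩
        rw [h1] at this
        exact this.symm
  have e1 : f.Gal ≃* Equiv.Perm (f.rootSet K) :=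
    MulEquiv.ofBijective (Gal.galActionHom f K)
      ⟨Gal.galActionHom_injective f K, MonoidHom.range_eq_top.1 hbij⟩
  exact ⟨e1.trans (Fintype.equivFinOfCardEq hcard).permCongrHom⟩

end helpers

/-- The polynomial `r₂(x) = x⁶ − 13x⁵ + 63x⁴ − 140x³ + 142x² − 59x + 7` is irreducible
over `ℚ` and its Galois group over `ℚ` is the full symmetric group `S₆`; in particular the
Galois group is non-abelian, so its roots are not cyclotomic integers. -/
theorem stmt_15 :
    Irreducible (X ^ 6 - 13 * X ^ 5 + 63 * X ^ 4 - 140 * X ^ 3 + 142 * X ^ 2 - 59 * X + 7 :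
      Polynomial ℚ) ∧
    Nonempty ((X ^ 6 - 13 * X ^ 5 + 63 * X ^ 4 - 140 * X ^ 3 + 142 * X ^ 2 - 59 * X + 7 :
      Polynomial ℚ).Gal ≃* Equiv.Perm (Fin 6)) ∧
    (∀ z : ℂ, Polynomial.aeval z
        (X ^ 6 - 13 * X ^ 5 + 63 * X ^ 4 - 140 * X ^ 3 + 142 * X ^ 2 - 59 * X + 7 :
          Polynomial ℚ) = 0 →
      ¬ ∃ (n : ℕ) (ζ : ℂ), 0 < n ∧ IsPrimitiveRoot ζ n ∧
        z ∈ Algebra.adjoin ℚ ({ζ} : Set ℂ)) := by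
  have hf : (X ^ 6 - 13 * X ^ 5 + 63 * X ^ 4 - 140 * X ^ 3 + 142 * X ^ 2 - 59 * X + 7 :
      Polynomial ℚ) = fZ.map (algebraMap ℤ ℚ) := (fZ_map _).symm
  generalize (X ^ 6 - 13 * X ^ 5 + 63 * X ^ 4 - 140 * X ^ 3 + 142 * X ^ 2 - 59 * X + 7 :
      Polynomial ℚ) = f at hf ⊢
  have hirr : Irreducible f := hf ▸ fQ_irr
  have := nf_split f
  have := galois_split f hirr.separable
  have : Fact ((f.map (algebraMap ℚ f.SplittingField)).Splits) := ⟨SplittingField.splits f⟩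
  have hgal := gal_lemma f.SplittingField f hf
  refine ⟨hirr, hgal, ?_⟩
  rintro z hz ⟨n, ζ, hn, hζ, h⟩
  obtain ⟨e⟩ := hgal
  have hc := cyc_lemma f hirr z hz n ζ hn hζ h (e.symm (Equiv.swap 0 1)) (e.symm (Equiv.swap 1 2))
  rw [← map_mul, ← map_mul] at hc
  have hc' := e.symm.injective hc
  revert hc'
  decide
end
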